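/- arXiv:math/0608144 — 2 statements merged into one kernel-verified Lean document; each statement's English description precedes it below -/
import Mathlib

section
/- Assume in addition that C is triangulated (the octahedral axiom holds). For all objects X, Y, Z, M, L, L' of C the following equality of rational numbers holds: ( |Hom(M ⊕ X, L)^{Y,Z[1]}_{L'[1]}| / |Aut(L)| ) · {M ⊕ X, L} / ( {L',L} · {L,L} ) = ( |Hom(L', M ⊕ X)^{Y,Z[1]}_L| / |Aut(L')| ) · {L', M ⊕ X} / ( {L',L} · {L',L'} ). -/
open CategoryTheory CategoryTheory.Limits CategoryTheory.Pretriangulated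

universe v u

/-- `{X,Y} := ∏_{i>0} |Hom(X[i],Y)|^{(-1)^i}`, as a rational number. -/
noncomputable def homAlternatingProd {C : Type u} [CategoryTheory.Category.{v} C]
    [HasShift C ℤ] (X Y : C) : ℚ :=
  ∏' i : ℕ, ((Nat.card (X⟦(i : ℤ) + 1⟧ ⟶ Y) : ℚ) ^ ((-1 : ℤ) ^ (i + 1)))

/-- `Cone(u) ≅ W`: there are morphisms completing `u` to a distinguished triangle with
third vertex `W`. -/
def ConeIs {C : Type u} [CategoryTheory.Category.{v} C] [Preadditive C] [HasZeroObject C]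
    [HasShift C ℤ] [∀ i : ℤ, (CategoryTheory.shiftFunctor C i).Additive] [Pretriangulated C]
    {A B : C} (u : A ⟶ B) (W : C) : Prop :=
  ∃ (v : B ⟶ W) (w : W ⟶ A⟦(1 : ℤ)⟧), Triangle.mk u v w ∈ distTriang C


namespace Stmt10Aux

lemma card_of_fibers {α β : Type*} [Finite α] [Finite β] (f : α → β) (n : ℕ)
    (h : ∀ b, Nat.card {a // f a = b} = n) : Nat.card α = Nat.card β * n := by
  have := Fintype.ofFinite β
  rw [← Nat.card_congr (Equiv.sigmaFiberEquiv f), Nat.card_sigma, Finset.sum_congr rfl (fun b _ => h b)]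
  simp

lemma card_ker_range {A B : Type*} [AddGroup A] [AddGroup B] [Finite A] (f : A →+ B) :
    Nat.card A = Nat.card f.range * Nat.card {a // f a = 0} := by
  have : Finite f.range := Set.finite_range f
  apply card_of_fibers f.rangeRestrict
  rintro ⟨_, a, rfl⟩
  refine Nat.card_congr
    { toFun := fun x => ⟨x.1 - a, ?_⟩, invFun := fun x => ⟨x.1 + a, ?_⟩, left_inv := ?_, right_inv := ?_ }
  · have := congrArg Subtype.val x.2
    simp only [AddMonoidHom.coe_rangeRestrict] at this
    simp [this]
  · ext
    simp [x.2]
  · intro x; simp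
  · intro x; simp

lemma card_exact {A B D E F : Type*} [AddGroup A] [AddGroup B] [AddGroup D] [AddGroup E]
    [AddGroup F] [Finite A] [Finite B] [Finite D]
    (α : A →+ B) (β : B →+ D) (γ : D →+ E) (δ : E →+ F)
    (h1 : ∀ b, β b = 0 ↔ ∃ a, α a = b) (h2 : ∀ b, γ b = 0 ↔ ∃ a, β a = b)
    (h3 : ∀ b, δ b = 0 ↔ ∃ a, γ a = b) :
    Nat.card {e // δ e = 0} * Nat.card B * Nat.card {a // α a = 0} = Nat.card D * Nat.card A := by
  have e1 : Nat.card {b // β b = 0} = Nat.card α.range :=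
    Nat.card_congr (Equiv.subtypeEquivRight fun b => by rw [h1]; rfl)
  have e2 : Nat.card {b // γ b = 0} = Nat.card β.range :=
    Nat.card_congr (Equiv.subtypeEquivRight fun b => by rw [h2]; rfl)
  have e3 : Nat.card {b // δ b = 0} = Nat.card γ.range :=
    Nat.card_congr (Equiv.subtypeEquivRight fun b => by rw [h3]; rfl)
  rw [card_ker_range α, card_ker_range β, card_ker_range γ, e1, e2, e3]
  ring

/-- finite alternating product -/
noncomputable def altProd (x : ℕ → ℕ) : ℚ := ∏' i : ℕ, ((x i : ℚ) ^ ((-1 : ℤ) ^ (i + 1)))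

lemma altProd_eq (x : ℕ → ℕ) (N : ℕ) (h : ∀ i ≥ N, x i = 1) :
    altProd x = ∏ i ∈ Finset.range N, ((x i : ℚ) ^ ((-1 : ℤ) ^ (i + 1))) := by
  apply tprod_eq_prod
  intro b hb
  rw [h b (by simpa using hb)]
  simp

lemma altProd_ne_zero (x : ℕ → ℕ) (N : ℕ) (h : ∀ i ≥ N, x i = 1) (h0 : ∀ i, x i ≠ 0) :
    altProd x ≠ 0 := by
  rw [altProd_eq x N h, Finset.prod_ne_zero_iff]
  intro i _
  exact zpow_ne_zero _ (by exact_mod_cast h0 i)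

lemma altProd_rec (k a b c : ℕ → ℕ) (hk : ∀ i, k i ≠ 0) (ha : ∀ i, a i ≠ 0)
    (hb : ∀ i, b i ≠ 0) (hc : ∀ i, c i ≠ 0) (N : ℕ)
    (ha1 : ∀ i ≥ N, a i = 1) (hb1 : ∀ i ≥ N, b i = 1) (hc1 : ∀ i ≥ N, c i = 1)
    (hk1 : ∀ i ≥ N, k i = 1)
    (h : ∀ i, k i * c i * k (i + 1) = b i * a (i + 1)) :
    (k 0 : ℚ) * altProd b = a 0 * altProd a * altProd c := by
  rw [altProd_eq a (N+1) (fun i hi => ha1 i (by omega)), altProd_eq b N hb1, altProd_eq c N hc1]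
  have key : ∀ m : ℕ, (k 0 : ℚ) * ∏ i ∈ Finset.range m, ((b i : ℚ) ^ ((-1 : ℤ) ^ (i + 1))) =
      a 0 * (∏ i ∈ Finset.range (m+1), ((a i : ℚ) ^ ((-1 : ℤ) ^ (i + 1)))) *
      (∏ i ∈ Finset.range m, ((c i : ℚ) ^ ((-1 : ℤ) ^ (i + 1)))) * (k m : ℚ) ^ ((-1 : ℤ) ^ m) := by
    intro m
    induction m with
    | zero =>
      have : (a 0 : ℚ) ≠ 0 := by exact_mod_cast ha 0
      simp [this]
    | succ m ih =>
      rw [Finset.prod_range_succ _ (m+1), Finset.prod_range_succ _ m, Finset.prod_range_succ (fun i => (c i : ℚ) ^ ((-1 : ℤ) ^ (i + 1))) m,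
        ← mul_assoc, ih]
      have hh : (k m : ℚ) * c m * k (m+1) = b m * a (m+1) := by exact_mod_cast h m
      have e1 : (k m : ℚ) ≠ 0 := by exact_mod_cast hk m
      have e2 : (k (m+1) : ℚ) ≠ 0 := by exact_mod_cast hk (m+1)
      have e3 : (b m : ℚ) ≠ 0 := by exact_mod_cast hb m
      have e4 : (c m : ℚ) ≠ 0 := by exact_mod_cast hc m
      have e5 : (a (m+1) : ℚ) ≠ 0 := by exact_mod_cast ha (m+1)
      have : (k m : ℚ) ^ ((-1 : ℤ) ^ m) * (b m : ℚ) ^ ((-1 : ℤ) ^ (m+1)) =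
          (a (m+1) : ℚ) ^ ((-1 : ℤ) ^ (m+1+1)) * (c m : ℚ) ^ ((-1 : ℤ) ^ (m+1)) * (k (m+1) : ℚ) ^ ((-1 : ℤ) ^ (m+1)) := by
        rcases neg_one_pow_eq_or ℤ m with h' | h'
        · simp only [pow_succ, h']
          simp
          field_simp
          linear_combination hh
        · simp only [pow_succ, h']
          simp
          field_simp
          linear_combination -hh
      linear_combination (a 0 * (∏ i ∈ Finset.range (m+1), ((a i : ℚ) ^ ((-1 : ℤ) ^ (i + 1)))) *
      (∏ i ∈ Finset.range m, ((c i : ℚ) ^ ((-1 : ℤ) ^ (i + 1))))) * this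
  rw [key N, hk1 N le_rfl]
  simp

open Classical in
lemma double_count {α β : Type*} [Finite α] [Finite β] (R : α → β → Prop)
    (st : α → ℕ) (st' : β → ℕ) (g g' : ℕ) (K K' : ℚ)
    (h : ∀ a b, R a b → st a * K = st' b * K')
    (h1 : ∀ a b, R a b → g' = Nat.card {b' // R a b'} * st' b)
    (h2 : ∀ a b, R a b → g = Nat.card {a' // R a' b} * st a) :
    (Nat.card {a // ∃ b, R a b} : ℚ) * g' * K' = Nat.card {b // ∃ a, R a b} * g * K := by
  have := Fintype.ofFinite α
  have := Fintype.ofFinite β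
  have A1 : ∑ a, ∑ b, (if R a b then st' b * K' else 0) = (Nat.card {a // ∃ b, R a b} : ℚ) * g' * K' := by
    have : ∀ a, ∑ b, (if R a b then st' b * K' else 0) = if ∃ b, R a b then g' * K' else 0 := by
      intro a
      split_ifs with hx
      · obtain ⟨b0, hb0⟩ := hx
        have hh : ∀ b, (if R a b then st' b * K' else 0) = if R a b then st' b0 * K' else 0 := by
          intro b
          split_ifs with hr
          · have e := h a b hr
            have e' := h a b0 hb0
            rw [← e, ← e']
          · rfl
        simp_rw [hh]
        rw [← Finset.sum_filter, Finset.sum_const, h1 a b0 hb0, Nat.card_eq_fintype_card, Fintype.card_subtype]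
        simp [mul_assoc]
      · apply Finset.sum_eq_zero
        intro b _
        rw [if_neg (fun hr => hx ⟨b, hr⟩)]
    simp_rw [this]
    rw [← Finset.sum_filter, Finset.sum_const, Nat.card_eq_fintype_card, Fintype.card_subtype]
    simp [mul_assoc]
  have A2 : ∑ b, ∑ a, (if R a b then st a * K else 0) = (Nat.card {b // ∃ a, R a b} : ℚ) * g * K := by
    have : ∀ b, ∑ a, (if R a b then st a * K else 0) = if ∃ a, R a b then g * K else 0 := by
      intro b
      split_ifs with hx
      · obtain ⟨a0, ha0⟩ := hx
        have hh : ∀ a, (if R a b then st a * K else 0) = if R a b then st a0 * K else 0 := by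
          intro a
          split_ifs with hr
          · rw [h a b hr, h a0 b ha0]
          · rfl
        simp_rw [hh]
        rw [← Finset.sum_filter, Finset.sum_const, h2 a0 b ha0, Nat.card_eq_fintype_card, Fintype.card_subtype]
        simp [mul_assoc]
      · apply Finset.sum_eq_zero
        intro a _
        rw [if_neg (fun hr => hx ⟨a, hr⟩)]
    simp_rw [this]
    rw [← Finset.sum_filter, Finset.sum_const, Nat.card_eq_fintype_card, Fintype.card_subtype]
    simp [mul_assoc]
  rw [← A1, ← A2, Finset.sum_comm]
  refine Finset.sum_congr rfl fun b _ => Finset.sum_congr rfl fun a _ => ?_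
  split_ifs with hr
  · rw [h a b hr]
  · rfl

end Stmt10Aux

namespace Stmt10Aux

lemma isIso_one_add {C : Type u} [CategoryTheory.Category.{v} C] [Preadditive C] {A B : C} (f : A ⟶ B) (g : B ⟶ A) (h : IsIso (𝟙 A + f ≫ g)) :
    IsIso (𝟙 B + g ≫ f) := by
  have h1 := IsIso.hom_inv_id (𝟙 A + f ≫ g)
  have h2 := IsIso.inv_hom_id (𝟙 A + f ≫ g)
  set r := inv (𝟙 A + f ≫ g)
  simp only [Preadditive.add_comp, Preadditive.comp_add, Category.id_comp, Category.comp_id,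
    Category.assoc] at h1 h2
  refine ⟨𝟙 B - g ≫ r ≫ f, ?_, ?_⟩
  · have := congrArg (fun t => g ≫ t ≫ f) h1
    simp only [Preadditive.add_comp, Preadditive.comp_add, Category.assoc, Category.id_comp] at this
    simp only [Preadditive.add_comp, Preadditive.comp_sub, Category.assoc, Category.id_comp,
      Category.comp_id]
    rw [← this]; abel
  · have := congrArg (fun t => g ≫ t ≫ f) h2
    simp only [Preadditive.add_comp, Preadditive.comp_add, Category.assoc, Category.id_comp] at this
    simp only [Preadditive.sub_comp, Preadditive.comp_add, Category.assoc, Category.id_comp,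
      Category.comp_id]
    nth_rewrite 1 [← this]; abel

section Cat

variable {C : Type u} [CategoryTheory.Category.{v} C] [Preadditive C]
    [HasZeroObject C] [HasShift C ℤ]
    [∀ i : ℤ, (CategoryTheory.shiftFunctor C i).Additive] [Pretriangulated C]

lemma dist_of_iso {A B D A' B' D' : C} {f : A ⟶ B} {g : B ⟶ D} {h : D ⟶ A⟦(1 : ℤ)⟧}
    {f' : A' ⟶ B'} {g' : B' ⟶ D'} {h' : D' ⟶ A'⟦(1 : ℤ)⟧}
    (H : Triangle.mk f g h ∈ distTriang C) (e1 : A' ≅ A) (e2 : B' ≅ B) (e3 : D' ≅ D)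
    (c1 : f' ≫ e2.hom = e1.hom ≫ f) (c2 : g' ≫ e3.hom = e2.hom ≫ g)
    (c3 : h' ≫ e1.hom⟦(1 : ℤ)⟧' = e3.hom ≫ h) : Triangle.mk f' g' h' ∈ distTriang C :=
  isomorphic_distinguished _ H _ (Triangle.isoMk (Triangle.mk f' g' h') (Triangle.mk f g h)
    e1 e2 e3 c1 c2 c3)

lemma dist_rotate {A B D : C} {f : A ⟶ B} {g : B ⟶ D} {h : D ⟶ A⟦(1 : ℤ)⟧} :
    Triangle.mk f g h ∈ distTriang C ↔ Triangle.mk g h (-f⟦(1 : ℤ)⟧') ∈ distTriang C :=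
  rotate_distinguished_triangle _

lemma coneIs_neg_of {A B W : C} {u : A ⟶ B} (h : ConeIs u W) : ConeIs (-u) W := by
  obtain ⟨a, b, h⟩ := h
  exact ⟨-a, b, dist_of_iso h (Iso.refl A)
    ⟨-𝟙 B, -𝟙 B, by simp, by simp⟩ (Iso.refl W) (by simp) (by simp) (by simp)⟩

lemma coneIs_neg {A B W : C} (u : A ⟶ B) : ConeIs (-u) W ↔ ConeIs u W :=
  ⟨fun h => by simpa using coneIs_neg_of h, fun h => coneIs_neg_of h⟩

lemma coneIs_shift_iff {A B D : C} (u : B ⟶ D) :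
    ConeIs u (A⟦(1 : ℤ)⟧) ↔ ∃ (f : A ⟶ B) (d : D ⟶ A⟦(1 : ℤ)⟧), Triangle.mk f u d ∈ distTriang C := by
  constructor
  · rintro ⟨d, w, h⟩
    obtain ⟨f, rfl⟩ := (shiftFunctor C (1 : ℤ)).map_surjective w
    refine ⟨-f, d, ?_⟩
    rw [dist_rotate, Functor.map_neg, neg_neg]
    exact h
  · rintro ⟨f, d, h⟩
    exact ⟨d, _, dist_rotate.1 h⟩

lemma cone_fwd [IsTriangulated C] {L' N L X M W : C} {l' : L' ⟶ N} {l : N ⟶ L} {d : L ⟶ L'⟦(1 : ℤ)⟧}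
    (h : Triangle.mk l' l d ∈ distTriang C) {i : X ⟶ N} {p : N ⟶ M} {e : M ⟶ X⟦(1 : ℤ)⟧}
    (h' : Triangle.mk i p e ∈ distTriang C) (hW : ConeIs (l' ≫ p) W) : ConeIs (i ≫ l) W := by
  obtain ⟨v13, w13, h13⟩ := hW
  let o := Triangulated.someOctahedron (rfl : l' ≫ p = l' ≫ p) h (dist_rotate.1 h') h13
  refine ⟨o.m₁, o.m₃, ?_⟩
  rw [dist_rotate, Functor.map_comp, ← Preadditive.neg_comp]
  exact o.mem

lemma coneIs_of_iso {A B W W' : C} {u : A ⟶ B} (h : ConeIs u W) (e : W ≅ W') : ConeIs u W' := by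
  obtain ⟨a, b, h⟩ := h
  exact ⟨a ≫ e.hom, e.inv ≫ b, dist_of_iso h (Iso.refl A) (Iso.refl B) e.symm
    (by simp) (by simp) (by simp)⟩

lemma coneIs_iso {A B W W' : C} {u : A ⟶ B} (h : ConeIs u W) (h' : ConeIs u W') :
    Nonempty (W ≅ W') := by
  obtain ⟨a, b, h⟩ := h
  obtain ⟨a', b', h'⟩ := h'
  exact ⟨Triangle.π₃.mapIso (isoTriangleOfIso₁₂ _ _ h h' (Iso.refl A) (Iso.refl B)
    (show u ≫ 𝟙 B = 𝟙 A ≫ u by simp))⟩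

lemma cone_iff [IsTriangulated C] {L' N L X M W : C} {l' : L' ⟶ N} {l : N ⟶ L} {d : L ⟶ L'⟦(1 : ℤ)⟧}
    (h : Triangle.mk l' l d ∈ distTriang C) {i : X ⟶ N} {p : N ⟶ M} {e : M ⟶ X⟦(1 : ℤ)⟧}
    (h' : Triangle.mk i p e ∈ distTriang C) : ConeIs (l' ≫ p) W ↔ ConeIs (i ≫ l) W := by
  refine ⟨cone_fwd h h', fun hW => ?_⟩
  obtain ⟨W', v, w, h13⟩ := distinguished_cocone_triangle (l' ≫ p)
  have hW' : ConeIs (l' ≫ p) W' := ⟨v, w, h13⟩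
  obtain ⟨e⟩ := coneIs_iso (cone_fwd h h' hW') hW
  exact coneIs_of_iso hW' e

lemma biprod_tri1 [HasBinaryBiproducts C] (M X : C) :
    Triangle.mk (biprod.inl : M ⟶ M ⊞ X) biprod.snd 0 ∈ distTriang C :=
  binaryBiproductTriangle_distinguished M X

lemma biprod_tri2 [HasBinaryBiproducts C] (M X : C) :
    Triangle.mk (biprod.inr : X ⟶ M ⊞ X) biprod.fst 0 ∈ distTriang C :=
  dist_of_iso (biprod_tri1 X M) (Iso.refl X) (biprod.braiding M X) (Iso.refl M)
    (by ext <;> simp) (by simp) (by simp)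

/-- the relation -/
def Tri {L' N L : C} (l' : L' ⟶ N) (l : N ⟶ L) : Prop :=
  ∃ d : L ⟶ L'⟦(1 : ℤ)⟧, Triangle.mk l' l d ∈ distTriang C

lemma Tri.comp_left {L' N L : C} {l' : L' ⟶ N} {l : N ⟶ L} (h : Tri l' l) (a : L' ≅ L') :
    Tri (a.hom ≫ l') l := by
  obtain ⟨d, h⟩ := h
  refine ⟨d ≫ a.inv⟦1⟧', dist_of_iso h a (Iso.refl _) (Iso.refl _) (by simp) (by simp) ?_⟩
  simp [← Functor.map_comp]

lemma Tri.comp_right {L' N L : C} {l' : L' ⟶ N} {l : N ⟶ L} (h : Tri l' l) (a : L ≅ L) :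
    Tri l' (l ≫ a.hom) := by
  obtain ⟨d, h⟩ := h
  exact ⟨a.inv ≫ d, dist_of_iso h (Iso.refl _) (Iso.refl _) a.symm (by simp) (by simp) (by simp)⟩

lemma Tri.exists_left {L' N L : C} {l' l'' : L' ⟶ N} {l : N ⟶ L} (h : Tri l' l) (h' : Tri l'' l) :
    ∃ a : L' ≅ L', a.hom ≫ l' = l'' := by
  obtain ⟨d, h⟩ := h
  obtain ⟨d', h'⟩ := h'
  have H : ∃ a : L' ⟶ L', l'' ≫ 𝟙 N = a ≫ l' ∧ d' ≫ a⟦(1 : ℤ)⟧' = 𝟙 L ≫ d :=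
    complete_distinguished_triangle_morphism₁ _ _ h' h (𝟙 N) (𝟙 L)
      (show l ≫ 𝟙 L = 𝟙 N ≫ l by simp)
  obtain ⟨a, ha, ha'⟩ := H
  let φ : Triangle.mk l'' l d' ⟶ Triangle.mk l' l d :=
    Triangle.homMk _ _ a (𝟙 N) (𝟙 L) ha (show l ≫ 𝟙 L = 𝟙 N ≫ l by simp) ha'
  have : IsIso a := isIso₁_of_isIso₂₃ φ h' h (inferInstanceAs (IsIso (𝟙 N))) (inferInstanceAs (IsIso (𝟙 L)))
  exact ⟨asIso a, by simpa using ha.symm⟩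

lemma Tri.exists_right {L' N L : C} {l' : L' ⟶ N} {l l₂ : N ⟶ L} (h : Tri l' l) (h' : Tri l' l₂) :
    ∃ a : L ≅ L, l ≫ a.hom = l₂ := by
  obtain ⟨d, h⟩ := h
  obtain ⟨d', h'⟩ := h'
  have H : ∃ a : L ⟶ L, l ≫ a = 𝟙 N ≫ l₂ ∧ d ≫ (𝟙 L')⟦(1 : ℤ)⟧' = a ≫ d' :=
    complete_distinguished_triangle_morphism _ _ h h' (𝟙 L') (𝟙 N)
      (show l' ≫ 𝟙 N = 𝟙 L' ≫ l' by simp)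
  obtain ⟨a, ha, ha'⟩ := H
  let φ : Triangle.mk l' l d ⟶ Triangle.mk l' l₂ d' :=
    Triangle.homMk _ _ (𝟙 L') (𝟙 N) a (show l' ≫ 𝟙 N = 𝟙 L' ≫ l' by simp) ha ha'
  have : IsIso a := isIso₃_of_isIso₁₂ φ h h' (inferInstanceAs (IsIso (𝟙 L'))) (inferInstanceAs (IsIso (𝟙 N)))
  exact ⟨asIso a, by simpa using ha⟩

variable [hfin : ∀ X Y : C, Finite (X ⟶ Y)]

instance (X : C) : Finite (X ≅ X) :=
  Finite.of_injective (fun a : X ≅ X => a.hom) (fun _ _ h => Iso.ext h)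

lemma card_fib_left {L' N L : C} {l' : L' ⟶ N} {l : N ⟶ L} (h : Tri l' l) :
    Nat.card (L' ≅ L') = Nat.card {m : L' ⟶ N // Tri m l} * Nat.card {a : (L' ≅ L') // a.hom ≫ l' = l'} := by
  apply card_of_fibers (fun a => ⟨a.hom ≫ l', h.comp_left a⟩)
  rintro ⟨m, hm⟩
  obtain ⟨b, rfl⟩ := h.exists_left hm
  refine Nat.card_congr
    { toFun := fun x => ⟨b.symm ≪≫ x.1, ?_⟩, invFun := fun x => ⟨b ≪≫ x.1, ?_⟩,
      left_inv := ?_, right_inv := ?_ }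
  · have := congrArg Subtype.val x.2
    simp only at this
    simp [this]
  · ext
    simp [x.2]
  · intro x; ext; simp
  · intro x; ext; simp

lemma card_fib_right {L' N L : C} {l' : L' ⟶ N} {l : N ⟶ L} (h : Tri l' l) :
    Nat.card (L ≅ L) = Nat.card {m : N ⟶ L // Tri l' m} * Nat.card {a : (L ≅ L) // l ≫ a.hom = l} := by
  apply card_of_fibers (fun a => ⟨l ≫ a.hom, h.comp_right a⟩)
  rintro ⟨m, hm⟩
  obtain ⟨b, rfl⟩ := h.exists_right hm
  refine Nat.card_congr
    { toFun := fun x => ⟨x.1 ≪≫ b.symm, ?_⟩, invFun := fun x => ⟨x.1 ≪≫ b, ?_⟩,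
      left_inv := ?_, right_inv := ?_ }
  · have := congrArg Subtype.val x.2
    simp only at this
    simp [reassoc_of% this]
  · ext
    simp [reassoc_of% x.2]
  · intro x; ext; simp
  · intro x; ext; simp

lemma card_stab_right {L' N L : C} {l' : L' ⟶ N} {l : N ⟶ L} {d : L ⟶ L'⟦(1 : ℤ)⟧}
    (h : Triangle.mk l' l d ∈ distTriang C) :
    Nat.card {s : L'⟦(1 : ℤ)⟧ ⟶ L // IsIso (𝟙 L + d ≫ s)} =
      Nat.card {a : (L ≅ L) // l ≫ a.hom = l} * Nat.card {s : L'⟦(1 : ℤ)⟧ ⟶ L // d ≫ s = 0} := by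
  have hz : l ≫ d = 0 := comp_distTriang_mor_zero₂₃ _ h
  apply card_of_fibers (fun s => ⟨@asIso C _ L L _ s.2, by simp [reassoc_of% hz]⟩)
  rintro ⟨a, ha⟩
  have ex : ∃ t : L'⟦(1 : ℤ)⟧ ⟶ L, a.hom - 𝟙 L = d ≫ t :=
    Triangle.yoneda_exact₃ _ h (a.hom - 𝟙 L)
      (show l ≫ (a.hom - 𝟙 L) = 0 by simp [ha])
  obtain ⟨t, ht⟩ := ex
  refine Nat.card_congr
    { toFun := fun x => ⟨x.1.1 - t, ?_⟩, invFun := fun x => ⟨⟨x.1 + t, ?_⟩, ?_⟩,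
      left_inv := ?_, right_inv := ?_ }
  · have := congrArg (fun y => Iso.hom (Subtype.val y)) x.2
    simp only [asIso_hom] at this
    rw [Preadditive.comp_sub, ← ht, ← this]; abel
  · rw [Preadditive.comp_add, x.2, ← ht]
    have : 𝟙 L + (0 + (a.hom - 𝟙 L)) = a.hom := by abel
    rw [this]; infer_instance
  · ext
    simp only [asIso_hom]
    rw [Preadditive.comp_add, x.2, ← ht]
    abel
  · intro x; ext; simp
  · intro x; ext; simp

lemma card_stab_left {L' N L : C} {l' : L' ⟶ N} {l : N ⟶ L} {d : L ⟶ L'⟦(1 : ℤ)⟧}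
    (h : Triangle.mk l' l d ∈ distTriang C) :
    Nat.card {s : L'⟦(1 : ℤ)⟧ ⟶ L // IsIso (𝟙 L + d ≫ s)} =
      Nat.card {a : (L' ≅ L') // a.hom ≫ l' = l'} * Nat.card {s : L'⟦(1 : ℤ)⟧ ⟶ L // s ≫ d = 0} := by
  have hz : d ≫ l'⟦(1 : ℤ)⟧' = 0 := comp_distTriang_mor_zero₃₁ _ h
  have key : ∀ s : {s : L'⟦(1 : ℤ)⟧ ⟶ L // IsIso (𝟙 L + d ≫ s)},
      ∃ a : (L' ≅ L'), a.hom ≫ l' = l' ∧ a.hom⟦(1 : ℤ)⟧' = 𝟙 _ + s.1 ≫ d := by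
    intro s
    have := isIso_one_add d s.1 s.2
    refine ⟨(shiftFunctor C (1 : ℤ)).preimageIso (asIso (𝟙 _ + s.1 ≫ d)), ?_, by simp⟩
    apply (shiftFunctor C (1 : ℤ)).map_injective
    simp [hz]
  choose F hF1 hF2 using key
  apply card_of_fibers (fun s => ⟨F s, hF1 s⟩)
  rintro ⟨a, ha⟩
  have h0 : (a.hom⟦(1 : ℤ)⟧' - 𝟙 _) ≫ l'⟦(1 : ℤ)⟧' = 0 := by
    rw [Preadditive.sub_comp, ← Functor.map_comp, ha, Category.id_comp, sub_self]
  have ex : ∃ t : L'⟦(1 : ℤ)⟧ ⟶ L, a.hom⟦(1 : ℤ)⟧' - 𝟙 _ = t ≫ d :=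
    Triangle.coyoneda_exact₁ _ h (a.hom⟦(1 : ℤ)⟧' - 𝟙 _) h0
  obtain ⟨t, ht⟩ := ex
  have hx : ∀ x : {s : L'⟦(1 : ℤ)⟧ ⟶ L // s ≫ d = 0}, IsIso (𝟙 L + d ≫ (x.1 + t)) := by
    intro x
    apply isIso_one_add
    rw [Preadditive.add_comp, x.2, ← ht]
    have : 𝟙 _ + (0 + (a.hom⟦(1 : ℤ)⟧' - 𝟙 _)) = a.hom⟦(1 : ℤ)⟧' := by abel
    rw [this]; infer_instance
  refine Nat.card_congr
    { toFun := fun x => ⟨x.1.1 - t, ?_⟩, invFun := fun x => ⟨⟨x.1 + t, hx x⟩, ?_⟩,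
      left_inv := ?_, right_inv := ?_ }
  · have := congrArg (fun y => (Iso.hom (Subtype.val y))⟦(1 : ℤ)⟧') x.2
    simp only [hF2] at this
    rw [Preadditive.sub_comp, ← ht, ← this]; abel
  · ext
    apply (shiftFunctor C (1 : ℤ)).map_injective
    simp only [hF2]
    rw [Preadditive.add_comp, x.2, ← ht]
    abel
  · intro x; ext; simp
  · intro x; ext; simp

end Cat

end Stmt10Aux

namespace Stmt10Aux

section Cat2

variable {C : Type u} [CategoryTheory.Category.{v} C] [Preadditive C]
    [HasZeroObject C] [HasShift C ℤ]
    [∀ i : ℤ, (CategoryTheory.shiftFunctor C i).Additive] [Pretriangulated C]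

/-- number of `s` with `h ≫ s = 0` -/
noncomputable def kR {P Q : C} (h : P ⟶ Q) (W : C) : ℕ := Nat.card {s : Q ⟶ W // h ≫ s = 0}

/-- number of `s` with `s ≫ h = 0` -/
noncomputable def kL {P Q : C} (W : C) (h : P ⟶ Q) : ℕ := Nat.card {s : W ⟶ P // s ≫ h = 0}

lemma exR {A B D : C} {f : A ⟶ B} {g : B ⟶ D} {h : D ⟶ A⟦(1 : ℤ)⟧}
    (H : Triangle.mk f g h ∈ distTriang C) {W : C} (b : B ⟶ W) :
    f ≫ b = 0 ↔ ∃ a : D ⟶ W, g ≫ a = b := by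
  constructor
  · intro hb
    obtain ⟨a, ha⟩ := Triangle.yoneda_exact₂ _ H b hb
    exact ⟨a, ha.symm⟩
  · rintro ⟨a, rfl⟩
    have hz : f ≫ g = 0 := comp_distTriang_mor_zero₁₂ _ H
    rw [← Category.assoc, hz, zero_comp]

lemma exL {A B D : C} {f : A ⟶ B} {g : B ⟶ D} {h : D ⟶ A⟦(1 : ℤ)⟧}
    (H : Triangle.mk f g h ∈ distTriang C) {W : C} (b : W ⟶ B) :
    b ≫ g = 0 ↔ ∃ a : W ⟶ A, a ≫ f = b := by
  constructor
  · intro hb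
    obtain ⟨a, ha⟩ := Triangle.coyoneda_exact₂ _ H b hb
    exact ⟨a, ha.symm⟩
  · rintro ⟨a, rfl⟩
    have hz : f ≫ g = 0 := comp_distTriang_mor_zero₁₂ _ H
    rw [Category.assoc, hz, comp_zero]

variable [hfin : ∀ X Y : C, Finite (X ⟶ Y)]

lemma recR {A B D : C} {f : A ⟶ B} {g : B ⟶ D} {h : D ⟶ A⟦(1 : ℤ)⟧}
    (H : Triangle.mk f g h ∈ distTriang C) (W : C) :
    kR h W * Nat.card (D⟦(1 : ℤ)⟧ ⟶ W) * kR (-h⟦(1 : ℤ)⟧') W =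
      Nat.card (B⟦(1 : ℤ)⟧ ⟶ W) * Nat.card (A⟦(1 : ℤ)⟧⟦(1 : ℤ)⟧ ⟶ W) := by
  have H1 := dist_rotate.1 H
  have H2 := dist_rotate.1 H1
  have H3 := dist_rotate.1 H2
  have H4 := dist_rotate.1 H3
  exact card_exact (Preadditive.leftComp W (-h⟦(1 : ℤ)⟧')) (Preadditive.leftComp W (-g⟦(1 : ℤ)⟧'))
    (Preadditive.leftComp W (-f⟦(1 : ℤ)⟧')) (Preadditive.leftComp W h)
    (fun b => exR H4 b) (fun b => exR H3 b) (fun b => exR H2 b)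

/-- triangle shifted by rotations -/
noncomputable def rotT (T : Triangle C) : ℕ → Triangle C
  | 0 => T
  | n + 1 => (rotT T n).rotate.rotate.rotate

/-- triangle shifted by inverse rotations -/
noncomputable def irotT (T : Triangle C) : ℕ → Triangle C
  | 0 => T
  | n + 1 => (irotT T n).invRotate.invRotate.invRotate

lemma rotT_mem (T : Triangle C) (hT : T ∈ distTriang C) (n : ℕ) : rotT T n ∈ distTriang C := by
  induction n with
  | zero => exact hT
  | succ n ih => exact rot_of_distTriang _ (rot_of_distTriang _ (rot_of_distTriang _ ih))

lemma irotT_mem (T : Triangle C) (hT : T ∈ distTriang C) (n : ℕ) : irotT T n ∈ distTriang C := by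
  induction n with
  | zero => exact hT
  | succ n ih => exact inv_rot_of_distTriang _ (inv_rot_of_distTriang _ (inv_rot_of_distTriang _ ih))

/-- iterated shift -/
noncomputable def sh (X : C) : ℕ → C
  | 0 => X
  | n + 1 => (sh X n)⟦(1 : ℤ)⟧

/-- iterated negative shift -/
noncomputable def ish (X : C) : ℕ → C
  | 0 => X
  | n + 1 => (ish X n)⟦(-1 : ℤ)⟧

lemma rotT_obj (T : Triangle C) (n : ℕ) : (rotT T n).obj₁ = sh T.obj₁ n ∧
    (rotT T n).obj₂ = sh T.obj₂ n ∧ (rotT T n).obj₃ = sh T.obj₃ n := by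
  induction n with
  | zero => exact ⟨rfl, rfl, rfl⟩
  | succ n ih =>
    obtain ⟨h1, h2, h3⟩ := ih
    exact ⟨congrArg (fun X => X⟦(1 : ℤ)⟧) h1, congrArg (fun X => X⟦(1 : ℤ)⟧) h2,
      congrArg (fun X => X⟦(1 : ℤ)⟧) h3⟩

lemma irotT_obj (T : Triangle C) (n : ℕ) : (irotT T n).obj₁ = ish T.obj₁ n ∧
    (irotT T n).obj₂ = ish T.obj₂ n ∧ (irotT T n).obj₃ = ish T.obj₃ n := by
  induction n with
  | zero => exact ⟨rfl, rfl, rfl⟩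
  | succ n ih =>
    obtain ⟨h1, h2, h3⟩ := ih
    exact ⟨congrArg (fun X => X⟦(-1 : ℤ)⟧) h1, congrArg (fun X => X⟦(-1 : ℤ)⟧) h2,
      congrArg (fun X => X⟦(-1 : ℤ)⟧) h3⟩

lemma sh_iso (X : C) (n : ℕ) : Nonempty ((sh X n) ≅ X⟦(n : ℤ)⟧) := by
  induction n with
  | zero => exact ⟨((shiftFunctorZero C ℤ).app X).symm⟩
  | succ n ih =>
    obtain ⟨e⟩ := ih
    exact ⟨(shiftFunctor C (1 : ℤ)).mapIso e ≪≫
      ((shiftFunctorAdd' C (n : ℤ) 1 ((n + 1 : ℕ) : ℤ) (by simp)).app X).symm⟩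

lemma card_sh (X W : C) (n : ℕ) :
    Nat.card ((sh X n)⟦(1 : ℤ)⟧ ⟶ W) = Nat.card (X⟦(n : ℤ) + 1⟧ ⟶ W) := by
  obtain ⟨e⟩ := sh_iso X n
  exact Nat.card_congr (((shiftFunctor C (1 : ℤ)).mapIso e ≪≫
      ((shiftFunctorAdd' C (n : ℤ) 1 ((n : ℤ) + 1) rfl).app X).symm).homFromEquiv)

lemma card_shift_adj (X Y : C) :
    Nat.card (X ⟶ Y⟦(-1 : ℤ)⟧) = Nat.card (X⟦(1 : ℤ)⟧ ⟶ Y) :=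
  Nat.card_congr (((shiftEquiv C (1 : ℤ)).toAdjunction.homEquiv X Y).symm)

lemma card_ish (W X : C) (n : ℕ) :
    Nat.card (W⟦(1 : ℤ)⟧ ⟶ ish X n) = Nat.card (W⟦(n : ℤ) + 1⟧ ⟶ X) := by
  have gen : ∀ V : C, Nat.card (V ⟶ ish X n) = Nat.card (sh V n ⟶ X) := by
    induction n with
    | zero => intro V; rfl
    | succ n ih =>
      intro V
      have e : Nonempty (sh (V⟦(1 : ℤ)⟧) n ≅ sh V (n+1)) := by
        clear ih
        induction n with
        | zero => exact ⟨Iso.refl _⟩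
        | succ n ih' => exact ⟨(shiftFunctor C (1 : ℤ)).mapIso ih'.some⟩
      have := card_shift_adj V (ish X n)
      exact this.trans ((ih _).trans (Nat.card_congr e.some.homFromEquiv))
  rw [gen]
  have e : Nonempty (sh (W⟦(1 : ℤ)⟧) n ≅ sh W (n+1)) := by
    clear gen
    induction n with
    | zero => exact ⟨Iso.refl _⟩
    | succ n ih' => exact ⟨(shiftFunctor C (1 : ℤ)).mapIso ih'.some⟩
  rw [Nat.card_congr e.some.homFromEquiv]
  exact card_sh W X n

lemma kL_comp_iso {P Q R : C} (W : C) (h : P ⟶ Q) (e : Q ⟶ R) (_ : IsIso e) :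
    kL W (h ≫ e) = Nat.card {s : W ⟶ P // s ≫ h = 0} := by
  refine Nat.card_congr (Equiv.subtypeEquivRight fun s => ?_)
  rw [← Category.assoc]
  exact Preadditive.IsIso.comp_right_eq_zero _ _

lemma recL (T : Triangle C) (H : T ∈ distTriang C) (W : C) :
    kL W T.mor₃ * Nat.card (W ⟶ T.obj₁) * kL W (T.invRotate.invRotate.invRotate.mor₃) =
      Nat.card (W ⟶ T.obj₂) * Nat.card (W ⟶ T.invRotate.obj₁) := by
  have H1 := inv_rot_of_distTriang _ H
  have H2 := dist_rotate.1 H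
  have e : kL W (T.invRotate.invRotate.invRotate.mor₃) =
      Nat.card {a // Preadditive.rightComp W T.invRotate.mor₁ a = 0} := by
    have hi : ∀ Y : C, IsIso ((shiftEquiv C (1 : ℤ)).counitIso.inv.app Y) := fun Y => inferInstance
    exact kL_comp_iso W T.invRotate.mor₁ ((shiftEquiv C (1 : ℤ)).counitIso.inv.app T.obj₁)
      (hi T.obj₁)
  rw [e]
  exact card_exact (Preadditive.rightComp W T.invRotate.mor₁) (Preadditive.rightComp W T.mor₁)
    (Preadditive.rightComp W T.mor₂) (Preadditive.rightComp W T.mor₃)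
    (fun b => exL H1 b) (fun b => exL H b) (fun b => exL H2 b)

lemma card_hom_ne_zero (X Y : C) : Nat.card (X ⟶ Y) ≠ 0 := by
  rw [Nat.card_ne_zero]; exact ⟨⟨0⟩, hfin X Y⟩

lemma kR_ne_zero {P Q : C} (h : P ⟶ Q) (W : C) : kR h W ≠ 0 := by
  have := hfin Q W
  unfold kR
  rw [Nat.card_ne_zero]; exact ⟨⟨0, comp_zero⟩, inferInstance⟩

lemma kL_ne_zero {P Q : C} (h : P ⟶ Q) (W : C) : kL W h ≠ 0 := by
  have := hfin W P
  unfold kL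
  rw [Nat.card_ne_zero]; exact ⟨⟨0, zero_comp⟩, inferInstance⟩

lemma kR_eq_one {P Q : C} (h : P ⟶ Q) (W : C) (hc : Nat.card (Q ⟶ W) = 1) : kR h W = 1 := by
  have := (Nat.card_eq_one_iff_unique.1 hc).1
  exact Nat.card_eq_one_iff_unique.2 ⟨inferInstance, ⟨0, comp_zero⟩⟩

lemma kL_eq_one {P Q : C} (h : P ⟶ Q) (W : C) (hc : Nat.card (W ⟶ P) = 1) : kL W h = 1 := by
  have := (Nat.card_eq_one_iff_unique.1 hc).1
  exact Nat.card_eq_one_iff_unique.2 ⟨inferInstance, ⟨0, zero_comp⟩⟩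

lemma ev_one (hhfin : ∀ X Y : C, ∃ N : ℕ, ∀ i ≥ N, ∀ f : X⟦(i : ℤ)⟧ ⟶ Y, f = 0) (X Y : C) :
    ∃ N : ℕ, ∀ i ≥ N, Nat.card (X⟦(i : ℤ) + 1⟧ ⟶ Y) = 1 := by
  obtain ⟨N, hN⟩ := hhfin X Y
  refine ⟨N, fun i hi => ?_⟩
  have := hN (i+1) (by omega)
  push_cast at this
  exact Nat.card_eq_one_iff_unique.2 ⟨⟨fun a b => (this a).trans (this b).symm⟩, ⟨0⟩⟩

lemma hap_ne_zero (hhfin : ∀ X Y : C, ∃ N : ℕ, ∀ i ≥ N, ∀ f : X⟦(i : ℤ)⟧ ⟶ Y, f = 0) (X Y : C) :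
    homAlternatingProd X Y ≠ 0 := by
  obtain ⟨N, hN⟩ := ev_one hhfin X Y
  exact altProd_ne_zero (fun i => Nat.card (X⟦(i : ℤ) + 1⟧ ⟶ Y)) N hN (fun i => card_hom_ne_zero _ _)

lemma kR_formula (hhfin : ∀ X Y : C, ∃ N : ℕ, ∀ i ≥ N, ∀ f : X⟦(i : ℤ)⟧ ⟶ Y, f = 0)
    {A B D : C} {f : A ⟶ B} {g : B ⟶ D} {h : D ⟶ A⟦(1 : ℤ)⟧}
    (H : Triangle.mk f g h ∈ distTriang C) (W : C) :
    (kR h W : ℚ) * homAlternatingProd B W =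
      Nat.card (A⟦(1 : ℤ)⟧ ⟶ W) * homAlternatingProd A W * homAlternatingProd D W := by
  obtain ⟨Na, hNa⟩ := ev_one hhfin A W
  obtain ⟨Nb, hNb⟩ := ev_one hhfin B W
  obtain ⟨Nd, hNd⟩ := ev_one hhfin D W
  let T := Triangle.mk f g h
  have ea : ∀ i : ℕ, Nat.card ((rotT T i).obj₁⟦(1 : ℤ)⟧ ⟶ W) = Nat.card (A⟦(i : ℤ) + 1⟧ ⟶ W) := by
    intro i; rw [(rotT_obj T i).1]; exact card_sh A W i
  have eb : ∀ i : ℕ, Nat.card ((rotT T i).obj₂⟦(1 : ℤ)⟧ ⟶ W) = Nat.card (B⟦(i : ℤ) + 1⟧ ⟶ W) := by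
    intro i; rw [(rotT_obj T i).2.1]; exact card_sh B W i
  have ed : ∀ i : ℕ, Nat.card ((rotT T i).obj₃⟦(1 : ℤ)⟧ ⟶ W) = Nat.card (D⟦(i : ℤ) + 1⟧ ⟶ W) := by
    intro i; rw [(rotT_obj T i).2.2]; exact card_sh D W i
  have := altProd_rec (fun i => kR (rotT T i).mor₃ W)
    (fun i : ℕ => Nat.card (A⟦(i : ℤ) + 1⟧ ⟶ W)) (fun i : ℕ => Nat.card (B⟦(i : ℤ) + 1⟧ ⟶ W))
    (fun i : ℕ => Nat.card (D⟦(i : ℤ) + 1⟧ ⟶ W)) (fun i => kR_ne_zero _ _)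
    (fun i => card_hom_ne_zero _ _) (fun i => card_hom_ne_zero _ _) (fun i => card_hom_ne_zero _ _)
    (Na + Nb + Nd) (fun i hi => hNa i (by omega)) (fun i hi => hNb i (by omega))
    (fun i hi => hNd i (by omega))
    (fun i hi => kR_eq_one _ _ ((ea i).trans (hNa i (by omega)))) (fun i => by
      have r := recR (rotT_mem T H i) W
      have e' := ea (i+1)
      rw [← ed i, ← eb i, ← ea (i+1)]
      exact r)
  have e0 := ea 0
  rw [show homAlternatingProd B W = altProd (fun i : ℕ => Nat.card (B⟦(i : ℤ) + 1⟧ ⟶ W)) from rfl,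
    show homAlternatingProd A W = altProd (fun i : ℕ => Nat.card (A⟦(i : ℤ) + 1⟧ ⟶ W)) from rfl,
    show homAlternatingProd D W = altProd (fun i : ℕ => Nat.card (D⟦(i : ℤ) + 1⟧ ⟶ W)) from rfl]
  simp only [← e0] at this
  exact this

lemma kL_formula (hhfin : ∀ X Y : C, ∃ N : ℕ, ∀ i ≥ N, ∀ f : X⟦(i : ℤ)⟧ ⟶ Y, f = 0)
    {A B D : C} {f : A ⟶ B} {g : B ⟶ D} {h : D ⟶ A⟦(1 : ℤ)⟧}
    (H : Triangle.mk f g h ∈ distTriang C) (W : C) :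
    (kL (W⟦(1 : ℤ)⟧) h : ℚ) * homAlternatingProd W B =
      Nat.card (W⟦(1 : ℤ)⟧ ⟶ D) * homAlternatingProd W D * homAlternatingProd W A := by
  obtain ⟨Na, hNa⟩ := ev_one hhfin W A
  obtain ⟨Nb, hNb⟩ := ev_one hhfin W B
  obtain ⟨Nd, hNd⟩ := ev_one hhfin W D
  let T := Triangle.mk f g h
  have ea : ∀ i : ℕ, Nat.card (W⟦(1 : ℤ)⟧ ⟶ (irotT T i).obj₁) = Nat.card (W⟦(i : ℤ) + 1⟧ ⟶ A) := by
    intro i; rw [(irotT_obj T i).1]; exact card_ish W A i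
  have eb : ∀ i : ℕ, Nat.card (W⟦(1 : ℤ)⟧ ⟶ (irotT T i).obj₂) = Nat.card (W⟦(i : ℤ) + 1⟧ ⟶ B) := by
    intro i; rw [(irotT_obj T i).2.1]; exact card_ish W B i
  have ed : ∀ i : ℕ, Nat.card (W⟦(1 : ℤ)⟧ ⟶ (irotT T i).obj₃) = Nat.card (W⟦(i : ℤ) + 1⟧ ⟶ D) := by
    intro i; rw [(irotT_obj T i).2.2]; exact card_ish W D i
  have := altProd_rec (fun i => kL (W⟦(1 : ℤ)⟧) (irotT T i).mor₃)
    (fun i : ℕ => Nat.card (W⟦(i : ℤ) + 1⟧ ⟶ D)) (fun i : ℕ => Nat.card (W⟦(i : ℤ) + 1⟧ ⟶ B))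
    (fun i : ℕ => Nat.card (W⟦(i : ℤ) + 1⟧ ⟶ A)) (fun i => kL_ne_zero _ _)
    (fun i => card_hom_ne_zero _ _) (fun i => card_hom_ne_zero _ _) (fun i => card_hom_ne_zero _ _)
    (Na + Nb + Nd) (fun i hi => hNd i (by omega)) (fun i hi => hNb i (by omega))
    (fun i hi => hNa i (by omega))
    (fun i hi => kL_eq_one _ _ ((ed i).trans (hNd i (by omega)))) (fun i => by
      have r := recL _ (irotT_mem T H i) (W⟦(1 : ℤ)⟧)
      rw [← ea i, ← eb i, ← ed (i+1)]
      exact r)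
  have e0 := ed 0
  rw [show homAlternatingProd W B = altProd (fun i : ℕ => Nat.card (W⟦(i : ℤ) + 1⟧ ⟶ B)) from rfl,
    show homAlternatingProd W A = altProd (fun i : ℕ => Nat.card (W⟦(i : ℤ) + 1⟧ ⟶ A)) from rfl,
    show homAlternatingProd W D = altProd (fun i : ℕ => Nat.card (W⟦(i : ℤ) + 1⟧ ⟶ D)) from rfl]
  simp only [← e0] at this
  exact this

lemma main_count (hhfin : ∀ X Y : C, ∃ N : ℕ, ∀ i ≥ N, ∀ f : X⟦(i : ℤ)⟧ ⟶ Y, f = 0)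
    {N L L' : C} (P : (N ⟶ L) → Prop) (Q : (L' ⟶ N) → Prop)
    (hPQ : ∀ l l', Tri l' l → (P l ↔ Q l')) :
    (Nat.card {l : N ⟶ L // P l ∧ ∃ l' : L' ⟶ N, Tri l' l} : ℚ) / Nat.card (L ≅ L) *
        (homAlternatingProd N L / (homAlternatingProd L' L * homAlternatingProd L L)) =
    (Nat.card {l' : L' ⟶ N // Q l' ∧ ∃ l : N ⟶ L, Tri l' l} : ℚ) / Nat.card (L' ≅ L') *
        (homAlternatingProd L' N / (homAlternatingProd L' L * homAlternatingProd L' L')) := by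
  have n1 := hap_ne_zero hhfin N L
  have n2 := hap_ne_zero hhfin L' L
  have n3 := hap_ne_zero hhfin L L
  have n4 := hap_ne_zero hhfin L' N
  have n5 := hap_ne_zero hhfin L' L'
  have n6 : (Nat.card (L'⟦(1 : ℤ)⟧ ⟶ L) : ℚ) ≠ 0 := by exact_mod_cast card_hom_ne_zero _ _
  have n7 : (Nat.card (L ≅ L) : ℚ) ≠ 0 := by
    exact_mod_cast Nat.card_ne_zero.2 ⟨⟨Iso.refl L⟩, inferInstance⟩
  have n8 : (Nat.card (L' ≅ L') : ℚ) ≠ 0 := by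
    exact_mod_cast Nat.card_ne_zero.2 ⟨⟨Iso.refl L'⟩, inferInstance⟩
  have dc := double_count (fun (l : N ⟶ L) (l' : L' ⟶ N) => P l ∧ Tri l' l)
    (fun l => Nat.card {a : L ≅ L // l ≫ a.hom = l})
    (fun l' => Nat.card {a : L' ≅ L' // a.hom ≫ l' = l'})
    (Nat.card (L ≅ L)) (Nat.card (L' ≅ L'))
    (homAlternatingProd L L / homAlternatingProd N L)
    (homAlternatingProd L' L' / homAlternatingProd L' N)
    (by
      rintro l l' ⟨_, d, h⟩
      have e1 := card_stab_right h
      have e2 := card_stab_left h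
      have k1 := kR_formula hhfin h L
      have k2 := kL_formula hhfin h L'
      rw [e1] at e2
      have e3 : (Nat.card {a : L ≅ L // l ≫ a.hom = l} : ℚ) * kR d L =
        Nat.card {a : L' ≅ L' // a.hom ≫ l' = l'} * kL (L'⟦(1 : ℤ)⟧) d := by exact_mod_cast e2
      have k1' : (kR d L : ℚ) = (Nat.card (L'⟦(1 : ℤ)⟧ ⟶ L) * homAlternatingProd L' L) *
          (homAlternatingProd L L / homAlternatingProd N L) := by
        field_simp; linear_combination k1
      have k2' : (kL (L'⟦(1 : ℤ)⟧) d : ℚ) = (Nat.card (L'⟦(1 : ℤ)⟧ ⟶ L) * homAlternatingProd L' L) *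
          (homAlternatingProd L' L' / homAlternatingProd L' N) := by
        field_simp; linear_combination k2
      rw [k1', k2'] at e3
      apply mul_left_cancel₀ (mul_ne_zero n6 n2)
      linear_combination e3)
    (by
      rintro l l' ⟨hp, h⟩
      rw [card_fib_left h]
      congr 1
      exact Nat.card_congr (Equiv.subtypeEquivRight fun m => by simp [hp]))
    (by
      rintro l l' ⟨hp, h⟩
      rw [card_fib_right h]
      congr 1
      refine Nat.card_congr (Equiv.subtypeEquivRight fun m => ?_)
      refine ⟨fun hm => ⟨?_, hm⟩, fun hm => hm.2⟩
      rw [hPQ _ _ hm, ← hPQ _ _ h]; exact hp)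
  have c1 : Nat.card {l : N ⟶ L // ∃ l' : L' ⟶ N, P l ∧ Tri l' l} =
      Nat.card {l : N ⟶ L // P l ∧ ∃ l' : L' ⟶ N, Tri l' l} :=
    Nat.card_congr (Equiv.subtypeEquivRight fun m => by simp)
  have c2 : Nat.card {l' : L' ⟶ N // ∃ l : N ⟶ L, P l ∧ Tri l' l} =
      Nat.card {l' : L' ⟶ N // Q l' ∧ ∃ l : N ⟶ L, Tri l' l} :=
    Nat.card_congr (Equiv.subtypeEquivRight fun m => by
      constructor
      · rintro ⟨l, hp, h⟩
        exact ⟨(hPQ _ _ h).1 hp, l, h⟩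
      · rintro ⟨hq, l, h⟩
        exact ⟨l, (hPQ _ _ h).2 hq, h⟩)
  rw [c1, c2] at dc
  field_simp at dc ⊢
  linear_combination dc

end Cat2

end Stmt10Aux

theorem stmt10 {k : Type*} [Field k] [Finite k]
    {C : Type u} [CategoryTheory.Category.{v} C] [Preadditive C] [CategoryTheory.Linear k C]
    [HasZeroObject C] [HasBinaryBiproducts C] [HasShift C ℤ]
    [∀ i : ℤ, (CategoryTheory.shiftFunctor C i).Additive] [Pretriangulated C]
    [IsTriangulated C]
    [∀ X Y : C, FiniteDimensional k (X ⟶ Y)]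
    (hloc : ∀ X : C, Indecomposable X → IsLocalRing (CategoryTheory.End X))
    (hhfin : ∀ X Y : C, ∃ N : ℕ, ∀ i ≥ N, ∀ f : X⟦(i : ℤ)⟧ ⟶ Y, f = 0)
    (X Y Z M L L' : C) :
    (Nat.card {p : (M ⟶ L) × (X ⟶ L) // ConeIs p.2 Y ∧ ConeIs p.1 (Z⟦(1 : ℤ)⟧) ∧
        ConeIs (biprod.desc p.1 p.2) (L'⟦(1 : ℤ)⟧)} : ℚ) / Nat.card (Aut L) *
        (homAlternatingProd (M ⊞ X) L /
          (homAlternatingProd L' L * homAlternatingProd L L)) =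
      (Nat.card {p : (L' ⟶ M) × (L' ⟶ X) // ConeIs p.1 Y ∧ ConeIs p.2 (Z⟦(1 : ℤ)⟧) ∧
        ConeIs (biprod.lift p.1 (-p.2)) L} : ℚ) / Nat.card (Aut L') *
        (homAlternatingProd L' (M ⊞ X) /
          (homAlternatingProd L' L * homAlternatingProd L' L')) := by
  have hfin : ∀ X Y : C, Finite (X ⟶ Y) := fun X Y => Module.finite_of_finite k
  have key := Stmt10Aux.main_count hhfin (N := M ⊞ X) (L := L) (L' := L')
    (fun l => ConeIs (biprod.inr ≫ l) Y ∧ ConeIs (biprod.inl ≫ l) (Z⟦(1 : ℤ)⟧))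
    (fun l' => ConeIs (l' ≫ biprod.fst) Y ∧ ConeIs (l' ≫ biprod.snd) (Z⟦(1 : ℤ)⟧))
    (by
      rintro l l' ⟨d, h⟩
      rw [Stmt10Aux.cone_iff h (Stmt10Aux.biprod_tri2 M X),
        Stmt10Aux.cone_iff h (Stmt10Aux.biprod_tri1 M X)])
  have c1 : Nat.card {p : (M ⟶ L) × (X ⟶ L) // ConeIs p.2 Y ∧ ConeIs p.1 (Z⟦(1 : ℤ)⟧) ∧
        ConeIs (biprod.desc p.1 p.2) (L'⟦(1 : ℤ)⟧)} =
      Nat.card {l : M ⊞ X ⟶ L // (ConeIs (biprod.inr ≫ l) Y ∧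
        ConeIs (biprod.inl ≫ l) (Z⟦(1 : ℤ)⟧)) ∧ ∃ l' : L' ⟶ M ⊞ X, Stmt10Aux.Tri l' l} := by
    refine Nat.card_congr (Equiv.subtypeEquiv
      { toFun := fun p => biprod.desc p.1 p.2
        invFun := fun l => (biprod.inl ≫ l, biprod.inr ≫ l)
        left_inv := fun p => by simp
        right_inv := fun l => by ext <;> simp } ?_)
    intro p
    simp only [Equiv.coe_fn_mk, biprod.inr_desc, biprod.inl_desc, Stmt10Aux.coneIs_shift_iff (biprod.desc p.1 p.2),
      and_assoc]
    rfl
  have c2 : Nat.card {p : (L' ⟶ M) × (L' ⟶ X) // ConeIs p.1 Y ∧ ConeIs p.2 (Z⟦(1 : ℤ)⟧) ∧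
        ConeIs (biprod.lift p.1 (-p.2)) L} =
      Nat.card {l' : L' ⟶ M ⊞ X // (ConeIs (l' ≫ biprod.fst) Y ∧
        ConeIs (l' ≫ biprod.snd) (Z⟦(1 : ℤ)⟧)) ∧ ∃ l : M ⊞ X ⟶ L, Stmt10Aux.Tri l' l} := by
    refine Nat.card_congr (Equiv.subtypeEquiv
      { toFun := fun p => biprod.lift p.1 (-p.2)
        invFun := fun l => (l ≫ biprod.fst, -(l ≫ biprod.snd))
        left_inv := fun p => by simp
        right_inv := fun l => by ext <;> simp } ?_)
    intro p
    simp only [Equiv.coe_fn_mk, biprod.lift_fst, biprod.lift_snd, Stmt10Aux.coneIs_neg,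
      and_assoc]
    rfl
  rw [c1, c2]
  exact key
end

section
/- (Associativity of the derived Hall algebra.) Assume in addition that C is triangulated (the octahedral axiom holds). For objects X, Y and an object L of C define the derived Hall number F_{XY}^L := |Hom(X,L)_Y| · {X,L} / ( |Aut(X)| · {X,X} ) in Q (this depends only on the isomorphism classes of X, Y, L). Then for all objects X, Y, Z, M of C: sum over isomorphism classes [L] of F_{XY}^L · F_{ZL}^M = sum over isomorphism classes [L'] of F_{ZX}^{L'} · F_{L'Y}^M, where both sums have only finitely many nonzero terms. Consequently, the Q-vector space with basis the isomorphism classes of objects of C, equipped with the multiplication u_[X] * u_[Y] = sum_{[L]} F_{XY}^L u_[L], is an associative algebra with unit u_[0]. -/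
open CategoryTheory CategoryTheory.Limits CategoryTheory.Pretriangulated ZeroObject

universe v u

/-- The derived Hall number `F_{XY}^L := |Hom(X,L)_Y| · {X,L} / (|Aut X| · {X,X})`. -/
noncomputable def hallNumber {C : Type u} [CategoryTheory.Category.{v} C] [Preadditive C]
    [HasZeroObject C] [HasShift C ℤ] [∀ i : ℤ, (CategoryTheory.shiftFunctor C i).Additive]
    [Pretriangulated C] (X Y L : C) : ℚ :=
  (Nat.card {f : X ⟶ L // ConeIs f Y} : ℚ) * homAlternatingProd X L /
    (Nat.card (Aut X) * homAlternatingProd X X)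


set_option linter.unusedSectionVars false

namespace DHall

section
variable {C : Type u} [CategoryTheory.Category.{v} C] [Preadditive C]
    [HasZeroObject C] [HasShift C ℤ]
    [∀ i : ℤ, (CategoryTheory.shiftFunctor C i).Additive] [Pretriangulated C]

/-- `(f,g,h)` is a distinguished triangle. -/
def Dist {X Y Z : C} (f : X ⟶ Y) (g : Y ⟶ Z) (h : Z ⟶ X⟦(1 : ℤ)⟧) : Prop :=
  Triangle.mk f g h ∈ distTriang C

variable {X Y Z : C} {f : X ⟶ Y} {g : Y ⟶ Z} {h : Z ⟶ X⟦(1 : ℤ)⟧}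

lemma Dist.rot_iff : Dist f g h ↔ Dist g h (-f⟦(1 : ℤ)⟧') :=
  rotate_distinguished_triangle (Triangle.mk f g h)

lemma Dist.rot (H : Dist f g h) : Dist g h (-f⟦(1 : ℤ)⟧') := Dist.rot_iff.1 H

lemma Dist.z12 (H : Dist f g h) : f ≫ g = 0 := comp_distTriang_mor_zero₁₂ _ H
lemma Dist.z23 (H : Dist f g h) : g ≫ h = 0 := comp_distTriang_mor_zero₂₃ _ H
lemma Dist.z31 (H : Dist f g h) : h ≫ f⟦(1 : ℤ)⟧' = 0 := comp_distTriang_mor_zero₃₁ _ H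

lemma Dist.y2 (H : Dist f g h) {W : C} (x : Y ⟶ W) (hx : f ≫ x = 0) : ∃ y, x = g ≫ y :=
  Triangle.yoneda_exact₂ _ H x hx
lemma Dist.y3 (H : Dist f g h) {W : C} (x : Z ⟶ W) (hx : g ≫ x = 0) : ∃ y, x = h ≫ y :=
  Triangle.yoneda_exact₃ _ H x hx
lemma Dist.c2 (H : Dist f g h) {W : C} (x : W ⟶ Y) (hx : x ≫ g = 0) : ∃ y, x = y ≫ f :=
  Triangle.coyoneda_exact₂ _ H x hx
lemma Dist.c3 (H : Dist f g h) {W : C} (x : W ⟶ Z) (hx : x ≫ h = 0) : ∃ y, x = y ≫ g :=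
  Triangle.coyoneda_exact₃ _ H x hx

lemma Dist.of_iso {X' Y' Z' : C} {f' : X' ⟶ Y'} {g' : Y' ⟶ Z'} {h' : Z' ⟶ X'⟦(1 : ℤ)⟧}
    (H : Dist f g h) (a : X ≅ X') (b : Y ≅ Y') (c : Z ≅ Z')
    (h1 : f ≫ b.hom = a.hom ≫ f') (h2 : g ≫ c.hom = b.hom ≫ g')
    (h3 : h ≫ a.hom⟦(1 : ℤ)⟧' = c.hom ≫ h') : Dist f' g' h' :=
  isomorphic_distinguished _ H _ (Triangle.isoMk (Triangle.mk f g h) (Triangle.mk f' g' h')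
    a b c h1 h2 h3).symm

variable {X' Y' Z' : C} {f' : X' ⟶ Y'} {g' : Y' ⟶ Z'} {h' : Z' ⟶ X'⟦(1 : ℤ)⟧}

lemma Dist.iso3 (H : Dist f g h) (H' : Dist f' g' h') (a : X ⟶ X') (b : Y ⟶ Y') (c : Z ⟶ Z')
    [IsIso a] [IsIso b] (h1 : f ≫ b = a ≫ f') (h2 : g ≫ c = b ≫ g')
    (h3 : h ≫ a⟦(1 : ℤ)⟧' = c ≫ h') : IsIso c :=
  isIso₃_of_isIso₁₂ (T := Triangle.mk f g h) (T' := Triangle.mk f' g' h')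
    { hom₁ := a, hom₂ := b, hom₃ := c, comm₁ := h1, comm₂ := h2, comm₃ := h3 } H H' ‹_› ‹_›

lemma Dist.iso2 (H : Dist f g h) (H' : Dist f' g' h') (a : X ⟶ X') (b : Y ⟶ Y') (c : Z ⟶ Z')
    [IsIso a] [IsIso c] (h1 : f ≫ b = a ≫ f') (h2 : g ≫ c = b ≫ g')
    (h3 : h ≫ a⟦(1 : ℤ)⟧' = c ≫ h') : IsIso b :=
  isIso₂_of_isIso₁₃ (T := Triangle.mk f g h) (T' := Triangle.mk f' g' h')
    { hom₁ := a, hom₂ := b, hom₃ := c, comm₁ := h1, comm₂ := h2, comm₃ := h3 } H H' ‹_› ‹_›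

lemma Dist.iso1 (H : Dist f g h) (H' : Dist f' g' h') (a : X ⟶ X') (b : Y ⟶ Y') (c : Z ⟶ Z')
    [IsIso b] [IsIso c] (h1 : f ≫ b = a ≫ f') (h2 : g ≫ c = b ≫ g')
    (h3 : h ≫ a⟦(1 : ℤ)⟧' = c ≫ h') : IsIso a :=
  isIso₁_of_isIso₂₃ (T := Triangle.mk f g h) (T' := Triangle.mk f' g' h')
    { hom₁ := a, hom₂ := b, hom₃ := c, comm₁ := h1, comm₂ := h2, comm₃ := h3 } H H' ‹_› ‹_›

lemma Dist.ex3 (H : Dist f g h) {g' : Y ⟶ Z'} {h' : Z' ⟶ X⟦(1 : ℤ)⟧} (H' : Dist f g' h') :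
    ∃ c : Z ≅ Z', g ≫ c.hom = g' ∧ c.hom ≫ h' = h := by
  obtain ⟨c, h2, h3⟩ := complete_distinguished_triangle_morphism
    (Triangle.mk f g h) (Triangle.mk f g' h') H H' (𝟙 X) (𝟙 Y)
      (show f ≫ 𝟙 Y = 𝟙 X ≫ f by simp)
  change Z ⟶ Z' at c
  replace h2 : g ≫ c = 𝟙 Y ≫ g' := h2
  replace h3 : h ≫ (𝟙 X)⟦(1 : ℤ)⟧' = c ≫ h' := h3
  have := Dist.iso3 H H' (𝟙 X) (𝟙 Y) c (by simp) h2 h3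
  exact ⟨asIso c, by simpa using h2, by simpa using h3.symm⟩

lemma Dist.ex2 (H : Dist f g h) {f' : X ⟶ Y'} {g' : Y' ⟶ Z} (H' : Dist f' g' h) :
    ∃ c : Y ≅ Y', f ≫ c.hom = f' ∧ c.hom ≫ g' = g := by
  obtain ⟨c, h2, h3⟩ := complete_distinguished_triangle_morphism₂
    (Triangle.mk f g h) (Triangle.mk f' g' h) H H' (𝟙 X) (𝟙 Z)
      (show h ≫ (𝟙 X)⟦(1 : ℤ)⟧' = 𝟙 Z ≫ h by simp)
  change Y ⟶ Y' at c
  replace h2 : f ≫ c = 𝟙 X ≫ f' := h2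
  replace h3 : g ≫ 𝟙 Z = c ≫ g' := h3
  have := Dist.iso2 H H' (𝟙 X) c (𝟙 Z) h2 h3 (by simp)
  exact ⟨asIso c, by simpa using h2, by simpa using h3.symm⟩

lemma Dist.ex1 (H : Dist f g h) {f' : X' ⟶ Y} {h' : Z ⟶ X'⟦(1 : ℤ)⟧} (H' : Dist f' g h') :
    ∃ c : X ≅ X', c.hom ≫ f' = f ∧ h ≫ c.hom⟦(1 : ℤ)⟧' = h' := by
  obtain ⟨c, h2, h3⟩ := complete_distinguished_triangle_morphism₁
    (Triangle.mk f g h) (Triangle.mk f' g h') H H' (𝟙 Y) (𝟙 Z)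
      (show g ≫ 𝟙 Z = 𝟙 Y ≫ g by simp)
  change X ⟶ X' at c
  replace h2 : f ≫ 𝟙 Y = c ≫ f' := h2
  replace h3 : h ≫ c⟦(1 : ℤ)⟧' = 𝟙 Z ≫ h' := h3
  have := Dist.iso1 H H' c (𝟙 Y) (𝟙 Z) h2 (by simp) h3
  exact ⟨asIso c, by simpa using h2.symm, by simpa using h3⟩

/-- `fib w ≅ L` -/
def FibIs {X Y : C} (w : Y ⟶ X⟦(1 : ℤ)⟧) (L : C) : Prop := ∃ (f : X ⟶ L) (g : L ⟶ Y), Dist f g w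

lemma exists_fib {X Y : C} (w : Y ⟶ X⟦(1 : ℤ)⟧) : ∃ L : C, FibIs w L := by
  obtain ⟨L, f, g, H⟩ := distinguished_cocone_triangle₂ w
  exact ⟨L, f, g, H⟩

lemma exists_cone {X Y : C} (f : X ⟶ Y) :
    ∃ (L : C) (g : Y ⟶ L) (h : L ⟶ X⟦(1 : ℤ)⟧), Dist f g h := distinguished_cocone_triangle f

lemma FibIs.uniq {w : Y ⟶ X⟦(1 : ℤ)⟧} {L L' : C} (H : FibIs w L) (H' : FibIs w L') :
    Nonempty (L ≅ L') := by
  obtain ⟨f, g, H⟩ := H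
  obtain ⟨f', g', H'⟩ := H'
  obtain ⟨c, -, -⟩ := H.ex2 H'
  exact ⟨c⟩

/-- general transport of `FibIs` -/
lemma FibIs.transport {w : Y ⟶ X⟦(1 : ℤ)⟧} {w' : Y' ⟶ X'⟦(1 : ℤ)⟧} {L L' : C} (H : FibIs w L)
    (a : X ≅ X') (b : Y ≅ Y') (e : L ≅ L') (hw : w ≫ a.hom⟦(1 : ℤ)⟧' = b.hom ≫ w') :
    FibIs w' L' := by
  obtain ⟨f, g, H⟩ := H
  exact ⟨a.inv ≫ f ≫ e.hom, e.inv ≫ g ≫ b.hom, H.of_iso a e b (by simp) (by simp) hw⟩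

lemma FibIs.iso {w : Y ⟶ X⟦(1 : ℤ)⟧} {L L' : C} (H : FibIs w L) (e : L ≅ L') : FibIs w L' :=
  H.transport (Iso.refl _) (Iso.refl _) e (by simp)

/-- unshift a distinguished triangle -/
lemma Dist.unshift {m₁ : X⟦(1 : ℤ)⟧ ⟶ Y⟦(1 : ℤ)⟧} {m₃ : Y⟦(1 : ℤ)⟧ ⟶ Z⟦(1 : ℤ)⟧}
    (H : Dist m₁ m₃ (-h⟦(1 : ℤ)⟧')) : FibIs h Y := by
  refine ⟨-(shiftFunctor C (1 : ℤ)).preimage m₁, -(shiftFunctor C (1 : ℤ)).preimage m₃, ?_⟩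
  rw [Dist.rot_iff, Dist.rot_iff, Dist.rot_iff]
  simpa using H

end

lemma cnt {G H : Type*} [AddCommGroup G] [AddCommGroup H] (φ : G →+ H) (P : G → Prop)
    (S : H → Prop) (hP : ∀ x, P x ↔ S (φ x)) (hs : ∀ y, S y → ∃ x, φ x = y) :
    Nat.card {x // P x} = Nat.card {y // S y} * Nat.card {x // φ x = 0} := by
  choose s hs using hs
  rw [← Nat.card_prod]
  refine Nat.card_congr
    { toFun := fun x => (⟨φ x.1, (hP _).1 x.2⟩, ⟨x.1 - s _ ((hP _).1 x.2), by simp [hs]⟩)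
      invFun := fun y => ⟨y.2.1 + s _ y.1.2, by rw [hP]; simp [hs, y.2.2, y.1.2]⟩
      left_inv := fun x => by simp
      right_inv := fun y => ?_ }
  rcases y with ⟨⟨y, hy⟩, ⟨x, hx⟩⟩
  have : φ (x + s y hy) = y := by simp [hx, hs]
  simp [this]

lemma alg_step {κ0 κ1 κ2 κ3 a b c A B D A' B' D' : ℚ} (k0 : κ0 * κ1 = a) (k1 : κ1 * κ2 = b)
    (k2 : κ2 * κ3 = c) (i3 : κ3 * D' * A' = B') (rX : A * a * A' = 1) (rY : B * b * B' = 1)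
    (rZ : D * c * D' = 1) (nY' : B' ≠ 0) (cY : b ≠ 0) (cX : a ≠ 0) (cZ : c ≠ 0)
    (nX' : A' ≠ 0) (nZ' : D' ≠ 0) : κ0 * D * A = B := by
  have hA : A = 1 / (a * A') := by field_simp; linarith
  have hB : B = 1 / (b * B') := by field_simp; linarith
  have hD : D = 1 / (c * D') := by field_simp; linarith
  rw [hA, hB, hD, ← i3]
  subst k0 k1 k2
  have h0 : κ0 ≠ 0 := by rintro rfl; simp at cX
  have h1 : κ1 ≠ 0 := by rintro rfl; simp at cX
  have h2 : κ2 ≠ 0 := by rintro rfl; simp at cY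
  have h3 : κ3 ≠ 0 := by rintro rfl; simp at cZ
  field_simp

/-- the alternating product of a sequence -/
noncomputable def hp (c : ℕ → ℕ) : ℚ := ∏' i : ℕ, ((c i : ℚ) ^ ((-1 : ℤ) ^ (i + 1)))

lemma hp_eq (c : ℕ → ℕ) (N : ℕ) (hN : ∀ i ≥ N, c i = 1) :
    hp c = ∏ i ∈ Finset.range N, ((c i : ℚ) ^ ((-1 : ℤ) ^ (i + 1))) := by
  refine tprod_eq_prod (fun i hi => ?_)
  rw [hN i (by simpa using hi)]
  simp

lemma hp_ne_zero (c : ℕ → ℕ) (h0 : ∀ i, c i ≠ 0) (hN : ∃ N, ∀ i ≥ N, c i = 1) : hp c ≠ 0 := by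
  obtain ⟨N, hN⟩ := hN
  rw [hp_eq c N hN]
  refine Finset.prod_ne_zero_iff.2 (fun i _ => zpow_ne_zero _ (by exact_mod_cast h0 i))

lemma hp_rec (c : ℕ → ℕ) (h0 : ∀ i, c i ≠ 0) (hN : ∃ N, ∀ i ≥ N, c i = 1) :
    hp c * c 0 * hp (fun i => c (i + 1)) = 1 := by
  obtain ⟨N, hN⟩ := hN
  rw [hp_eq c (N + 1) (fun i hi => hN i (by omega)),
    hp_eq (fun i => c (i + 1)) N (fun i hi => hN (i + 1) (by omega)), Finset.prod_range_succ']
  have h : (c 0 : ℚ) ≠ 0 := by exact_mod_cast h0 0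
  have e : ((c 0 : ℚ) ^ ((-1 : ℤ) ^ (0 + 1))) * c 0 = 1 := by simp [h]
  rw [mul_assoc (∏ i ∈ _, _), e, mul_one, ← Finset.prod_mul_distrib]
  refine Finset.prod_eq_one (fun i _ => ?_)
  have h' : (c (i + 1) : ℚ) ≠ 0 := by exact_mod_cast h0 (i + 1)
  rw [← zpow_add₀ h']
  have : ((-1 : ℤ) ^ (i + 1 + 1)) + (-1) ^ (i + 1) = 0 := by ring
  rw [this, zpow_zero]

section
variable {C : Type u} [CategoryTheory.Category.{v} C] [Preadditive C]
    [HasZeroObject C] [HasShift C ℤ]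
    [∀ i : ℤ, (CategoryTheory.shiftFunctor C i).Additive] [Pretriangulated C]

/-- cards of the shifted homs -/
noncomputable def hc (A W : C) (i : ℕ) : ℕ := Nat.card (A⟦(i : ℤ)⟧ ⟶ W)

/-- vanishing from `N` on -/
def Bdd (N : ℕ) (A W : C) : Prop := ∀ i ≥ N, ∀ f : A⟦(i : ℤ)⟧ ⟶ W, f = 0

lemma hap_eq (A W : C) : homAlternatingProd A W = hp (fun i => hc A W (i + 1)) := by
  simp only [homAlternatingProd, hp, hc]
  push_cast
  rfl

lemma card_hom_congr {A A' B B' : C} (e : A ≅ A') (e' : B ≅ B') :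
    Nat.card (A ⟶ B) = Nat.card (A' ⟶ B') := Nat.card_congr (Iso.homCongr e e')

lemma hc_zero (A W : C) : hc A W 0 = Nat.card (A ⟶ W) :=
  card_hom_congr ((shiftFunctorZero' C ((0 : ℕ) : ℤ) (by simp)).app A) (Iso.refl W)

lemma hc_congr {A A' W W' : C} (e : A ≅ A') (e' : W ≅ W') (i : ℕ) : hc A W i = hc A' W' i :=
  card_hom_congr ((shiftFunctor C (i : ℤ)).mapIso e) e'

lemma hap_congr {A A' W W' : C} (e : A ≅ A') (e' : W ≅ W') :
    homAlternatingProd A W = homAlternatingProd A' W' := by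
  simp only [hap_eq, hc_congr e e']

noncomputable def shIso (A : C) (i : ℕ) : A⟦(1 : ℤ)⟧⟦(i : ℤ)⟧ ≅ A⟦((i + 1 : ℕ) : ℤ)⟧ :=
  ((shiftFunctorAdd' C (1 : ℤ) (i : ℤ) ((i + 1 : ℕ) : ℤ) (by push_cast; ring)).app A).symm

noncomputable def shIso' (A : C) (i : ℕ) : A⟦(i : ℤ)⟧⟦(1 : ℤ)⟧ ≅ A⟦((i + 1 : ℕ) : ℤ)⟧ :=
  ((shiftFunctorAdd' C (i : ℤ) (1 : ℤ) ((i + 1 : ℕ) : ℤ) (by push_cast; ring)).app A).symm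

lemma hc_shift (A W : C) (i : ℕ) : hc (A⟦(1 : ℤ)⟧) W i = hc A W (i + 1) :=
  card_hom_congr (shIso A i) (Iso.refl W)

/-- adjunction -/
noncomputable def adjEquiv (A W : C) : (A⟦(1 : ℤ)⟧ ⟶ W) ≃ (A ⟶ W⟦(-1 : ℤ)⟧) :=
  (shiftEquiv C (1 : ℤ)).toAdjunction.homEquiv A W

lemma hc_shift' (A W : C) (i : ℕ) : hc A (W⟦(-1 : ℤ)⟧) i = hc A W (i + 1) := by
  rw [hc, ← Nat.card_congr (adjEquiv (A⟦(i : ℤ)⟧) W)]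
  exact card_hom_congr (shIso' A i) (Iso.refl W)

variable [∀ X Y : C, Finite (X ⟶ Y)]

lemma hc_ne_zero (A W : C) (i : ℕ) : hc A W i ≠ 0 := by
  have : Nonempty (A⟦(i : ℤ)⟧ ⟶ W) := ⟨0⟩
  exact Nat.card_pos.ne'

lemma bdd_iff {N : ℕ} {A W : C} : Bdd N A W ↔ ∀ i ≥ N, hc A W i = 1 := by
  refine forall₂_congr (fun i _ => ?_)
  rw [hc, Nat.card_eq_one_iff_unique]
  constructor
  · intro h
    exact ⟨⟨fun a b => by rw [h a, h b]⟩, ⟨0⟩⟩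
  · rintro ⟨h, -⟩ f
    exact Subsingleton.elim _ _

lemma Bdd.mono {N N' : ℕ} (hN : N ≤ N') {A W : C} (h : Bdd N A W) : Bdd N' A W :=
  fun i hi => h i (by omega)

lemma Bdd.shift {N : ℕ} {A W : C} (h : Bdd (N + 1) A W) : Bdd N (A⟦(1 : ℤ)⟧) W := by
  rw [bdd_iff] at *
  intro i hi
  rw [hc_shift]
  exact h _ (by omega)

lemma Bdd.shift' {N : ℕ} {A W : C} (h : Bdd (N + 1) A W) : Bdd N A (W⟦(-1 : ℤ)⟧) := by
  rw [bdd_iff] at *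
  intro i hi
  rw [hc_shift']
  exact h _ (by omega)

lemma hap_ne_zero {N : ℕ} {A W : C} (h : Bdd N A W) : homAlternatingProd A W ≠ 0 := by
  rw [hap_eq]
  exact hp_ne_zero _ (fun i => hc_ne_zero _ _ _) ⟨N, fun i hi => bdd_iff.1 h _ (by omega)⟩

lemma hap_zero {A W : C} (h : Bdd 0 A W) : homAlternatingProd A W = 1 := by
  rw [hap_eq, hp_eq _ 0 (fun i hi => bdd_iff.1 h _ (by omega))]
  simp

lemma hap_rec {N : ℕ} {A W : C} (h : Bdd N A W) :
    homAlternatingProd A W * Nat.card (A⟦(1 : ℤ)⟧ ⟶ W) * homAlternatingProd (A⟦(1 : ℤ)⟧) W = 1 := by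
  have := hp_rec (fun i => hc A W (i + 1)) (fun i => hc_ne_zero _ _ _)
    ⟨N, fun i hi => bdd_iff.1 h _ (by omega)⟩
  simp only [hap_eq, hc_shift]
  rw [← hc_zero, hc_shift]
  exact this

lemma hap_rec' {N : ℕ} {A W : C} (h : Bdd N A W) :
    homAlternatingProd A W * Nat.card (A ⟶ W⟦(-1 : ℤ)⟧) * homAlternatingProd A (W⟦(-1 : ℤ)⟧)
      = 1 := by
  have := hp_rec (fun i => hc A W (i + 1)) (fun i => hc_ne_zero _ _ _)
    ⟨N, fun i hi => bdd_iff.1 h _ (by omega)⟩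
  simp only [hap_eq, hc_shift']
  rw [← hc_zero, hc_shift']
  exact this

lemma kstep {X Y Z : C} {f : X ⟶ Y} {g : Y ⟶ Z} {h : Z ⟶ X⟦(1 : ℤ)⟧} (H : Dist f g h) (W : C) :
    Nat.card {x : Z ⟶ W // g ≫ x = 0} * Nat.card {y : X⟦(1 : ℤ)⟧ ⟶ W // h ≫ y = 0} =
      Nat.card (X⟦(1 : ℤ)⟧ ⟶ W) := by
  have := cnt (Preadditive.leftComp W h) (fun _ => True) (fun x => g ≫ x = 0)
    (fun y => by
      change True ↔ g ≫ h ≫ y = 0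
      simp [← Category.assoc, H.z23]) (fun x hx => by
      obtain ⟨y, hy⟩ := H.y3 x hx
      exact ⟨y, hy.symm⟩)
  rw [← Nat.card_congr (Equiv.Set.univ (X⟦(1 : ℤ)⟧ ⟶ W))]
  exact this.symm

lemma lesY (W : C) (N : ℕ) : ∀ {X Y Z : C} {f : X ⟶ Y} {g : Y ⟶ Z} {h : Z ⟶ X⟦(1 : ℤ)⟧}
    (_ : Dist f g h) (_ : Bdd N X W) (_ : Bdd N Y W) (_ : Bdd N Z W),
    (Nat.card {x : Z ⟶ W // g ≫ x = 0} : ℚ) * homAlternatingProd Z W * homAlternatingProd X W =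
      homAlternatingProd Y W := by
  induction N with
  | zero =>
    intro X Y Z f g h H hX hY hZ
    rw [hap_zero hX, hap_zero hY, hap_zero hZ]
    have h1 := bdd_iff.1 hZ 0 le_rfl
    rw [hc_zero, Nat.card_eq_one_iff_unique] at h1
    obtain ⟨h1, -⟩ := h1
    have : Nat.card {x : Z ⟶ W // g ≫ x = 0} = 1 := by
      rw [Nat.card_eq_one_iff_unique]
      exact ⟨inferInstance, ⟨0, by simp⟩⟩
    simp [this]
  | succ N ih =>
    intro X Y Z f g h H hX hY hZ
    have k0 := kstep H W
    have k1 := kstep H.rot W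
    have k2 := kstep H.rot.rot W
    have i3 := ih H.rot.rot.rot hX.shift hY.shift hZ.shift
    have rX := hap_rec hX
    have rY := hap_rec hY
    have rZ := hap_rec hZ
    have nX := hap_ne_zero hX
    have nY := hap_ne_zero hY
    have nZ := hap_ne_zero hZ
    have nX' := hap_ne_zero hX.shift
    have nY' := hap_ne_zero hY.shift
    have nZ' := hap_ne_zero hZ.shift
    have cX : (Nat.card (X⟦(1 : ℤ)⟧ ⟶ W) : ℚ) ≠ 0 := by
      rintro h; simp [h] at rX
    have cY : (Nat.card (Y⟦(1 : ℤ)⟧ ⟶ W) : ℚ) ≠ 0 := by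
      rintro h; simp [h] at rY
    have cZ : (Nat.card (Z⟦(1 : ℤ)⟧ ⟶ W) : ℚ) ≠ 0 := by
      rintro h; simp [h] at rZ
    have k0' := congrArg (Nat.cast (R := ℚ)) k0
    have k1' := congrArg (Nat.cast (R := ℚ)) k1
    have k2' := congrArg (Nat.cast (R := ℚ)) k2
    push_cast at k0' k1' k2'
    exact alg_step k0' k1' k2' i3 rX rY rZ nY' cY cX cZ nX' nZ'

lemma Dist.inv {X Y Z : C} {f : X ⟶ Y} {g : Y ⟶ Z} {h : Z ⟶ X⟦(1 : ℤ)⟧} (H : Dist f g h) :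
    ∃ (a : Z⟦(-1 : ℤ)⟧ ⟶ X) (c : Y ⟶ Z⟦(-1 : ℤ)⟧⟦(1 : ℤ)⟧), Dist a f c :=
  ⟨_, _, inv_rot_of_distTriang _ H⟩

lemma kstep' {X Y Z : C} {f : X ⟶ Y} {g : Y ⟶ Z} {h : Z ⟶ X⟦(1 : ℤ)⟧} (H : Dist f g h) (W : C) :
    Nat.card {x : W ⟶ Y // x ≫ g = 0} * Nat.card {y : W ⟶ X // y ≫ f = 0} =
      Nat.card (W ⟶ X) := by
  have := cnt (Preadditive.rightComp W f) (fun _ => True) (fun x => x ≫ g = 0)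
    (fun y => by
      change True ↔ (y ≫ f) ≫ g = 0
      simp [H.z12]) (fun x hx => by
      obtain ⟨y, hy⟩ := H.c2 x hx
      exact ⟨y, hy.symm⟩)
  rw [← Nat.card_congr (Equiv.Set.univ (W ⟶ X))]
  exact this.symm

lemma lesC (W : C) (N : ℕ) : ∀ {X Y Z : C} {f : X ⟶ Y} {g : Y ⟶ Z} {h : Z ⟶ X⟦(1 : ℤ)⟧}
    (_ : Dist f g h) (_ : Bdd N W X) (_ : Bdd N W Y) (_ : Bdd N W Z),
    (Nat.card {x : W ⟶ X // x ≫ f = 0} : ℚ) * homAlternatingProd W X * homAlternatingProd W Z =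
      homAlternatingProd W Y := by
  induction N with
  | zero =>
    intro X Y Z f g h H hX hY hZ
    rw [hap_zero hX, hap_zero hY, hap_zero hZ]
    have h1 := bdd_iff.1 hX 0 le_rfl
    rw [hc_zero, Nat.card_eq_one_iff_unique] at h1
    obtain ⟨h1, -⟩ := h1
    have : Nat.card {x : W ⟶ X // x ≫ f = 0} = 1 := by
      rw [Nat.card_eq_one_iff_unique]
      exact ⟨inferInstance, ⟨0, by simp⟩⟩
    simp [this]
  | succ N ih =>
    intro X Y Z f g h H hX hY hZ
    obtain ⟨a, c, H1⟩ := H.inv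
    obtain ⟨a2, c2, H2⟩ := H1.inv
    obtain ⟨a3, c3, H3⟩ := H2.inv
    have k0 := kstep' H1 W
    have k1 := kstep' H2 W
    have k2 := kstep' H3 W
    have i3 := ih H3 hX.shift' hY.shift' hZ.shift'
    have rX := hap_rec' hX
    have rY := hap_rec' hY
    have rZ := hap_rec' hZ
    have nX' := hap_ne_zero hX.shift'
    have nY' := hap_ne_zero hY.shift'
    have nZ' := hap_ne_zero hZ.shift'
    have cX : (Nat.card (W ⟶ X⟦(-1 : ℤ)⟧) : ℚ) ≠ 0 := by
      rintro h; simp [h] at rX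
    have cY : (Nat.card (W ⟶ Y⟦(-1 : ℤ)⟧) : ℚ) ≠ 0 := by
      rintro h; simp [h] at rY
    have cZ : (Nat.card (W ⟶ Z⟦(-1 : ℤ)⟧) : ℚ) ≠ 0 := by
      rintro h; simp [h] at rZ
    have k0' := congrArg (Nat.cast (R := ℚ)) k0
    have k1' := congrArg (Nat.cast (R := ℚ)) k1
    have k2' := congrArg (Nat.cast (R := ℚ)) k2
    push_cast at k0' k1' k2'
    exact alg_step k0' k1' k2' i3 rZ rY rX nY' cY cZ cX nZ' nX'

end

section
variable {C : Type u} [CategoryTheory.Category.{v} C] [Preadditive C]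
    [HasZeroObject C] [HasShift C ℤ]
    [∀ i : ℤ, (CategoryTheory.shiftFunctor C i).Additive] [Pretriangulated C]
    [∀ X Y : C, Finite (X ⟶ Y)]

/-- distinguished triangles on three given objects -/
def Tri (X L Y : C) : Type v :=
  {t : (X ⟶ L) × (L ⟶ Y) × (Y ⟶ X⟦(1 : ℤ)⟧) // Dist t.1 t.2.1 t.2.2}

instance (X L Y : C) : Finite (Tri X L Y) := by unfold Tri; infer_instance

/-- infinitesimal stabilizer on the third object -/
def SY {X L Y : C} (t : Tri X L Y) : Type v :=
  {n : Y ⟶ Y // t.1.2.1 ≫ n = 0 ∧ n ≫ t.1.2.2 = 0}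

/-- infinitesimal stabilizer on the second object -/
def SL {X L Y : C} (t : Tri X L Y) : Type v :=
  {n : L ⟶ L // t.1.1 ≫ n = 0 ∧ n ≫ t.1.2.1 = 0}

instance {X L Y : C} (t : Tri X L Y) : Finite (SY t) := by unfold SY; infer_instance
instance {X L Y : C} (t : Tri X L Y) : Finite (SL t) := by unfold SL; infer_instance

instance (X : C) : Finite (Aut X) :=
  Finite.of_injective (fun e : Aut X => e.hom) (fun _ _ h => Iso.ext h)

lemma isIso_one_add_Y {X L Y : C} {f : X ⟶ L} {g : L ⟶ Y} {h : Y ⟶ X⟦(1 : ℤ)⟧} (H : Dist f g h)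
    (n : Y ⟶ Y) (h1 : g ≫ n = 0) (h2 : n ≫ h = 0) : IsIso (𝟙 Y + n) :=
  H.iso3 H (𝟙 _) (𝟙 _) _ (by simp) (by simp [h1]) (by simp [h2])

lemma isIso_one_add_L {X L Y : C} {f : X ⟶ L} {g : L ⟶ Y} {h : Y ⟶ X⟦(1 : ℤ)⟧} (H : Dist f g h)
    (n : L ⟶ L) (h1 : f ≫ n = 0) (h2 : n ≫ g = 0) : IsIso (𝟙 L + n) :=
  H.iso2 H (𝟙 _) _ (𝟙 _) (by simp [h1]) (by simp [h2]) (by simp)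

lemma card_SY (X L Y : C) : Nat.card (Σ t : Tri X L Y, SY t) =
    Nat.card {f : X ⟶ L // ConeIs f Y} * Nat.card (Aut Y) := by
  have hch : ∀ f : {f : X ⟶ L // ConeIs f Y}, ∃ (g : L ⟶ Y) (h : Y ⟶ X⟦(1 : ℤ)⟧),
    Dist f.1 g h := fun f => f.2
  choose g0 h0 H0 using hch
  have hf : ∀ t : Tri X L Y, ConeIs t.1.1 Y := fun t => ⟨_, _, t.2⟩
  choose e he1 he2 using fun t : Tri X L Y => (H0 ⟨t.1.1, hf t⟩).ex3 t.2
  rw [← Nat.card_prod]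
  let φ : (Σ t : Tri X L Y, SY t) → {f : X ⟶ L // ConeIs f Y} × Aut Y := fun p =>
    (⟨p.1.1.1, hf p.1⟩,
      (e p.1) ≪≫ @asIso _ _ _ _ (𝟙 Y + p.2.1) (isIso_one_add_Y p.1.2 p.2.1 p.2.2.1 p.2.2.2))
  refine Nat.card_eq_of_bijective φ ⟨?_, ?_⟩
  · rintro ⟨t, n, hn1, hn2⟩ ⟨t', n', hn1', hn2'⟩ heq
    have h1 : t.1.1 = t'.1.1 := congrArg (fun z => z.1.1) heq
    have h2 : (e t).hom ≫ (𝟙 Y + n) = (e t').hom ≫ (𝟙 Y + n') := congrArg (fun z => z.2.hom) heq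
    have a1 : g0 ⟨t.1.1, hf t⟩ ≫ (e t).hom ≫ (𝟙 Y + n) = t.1.2.1 := by
      rw [← Category.assoc, he1]; simp [hn1]
    have a1' : g0 ⟨t'.1.1, hf t'⟩ ≫ (e t').hom ≫ (𝟙 Y + n') = t'.1.2.1 := by
      rw [← Category.assoc, he1]; simp [hn1']
    have a2 : ((e t).hom ≫ (𝟙 Y + n)) ≫ t.1.2.2 = h0 ⟨t.1.1, hf t⟩ := by
      rw [Category.assoc, ← he2]; simp [hn2]
    have a2' : ((e t').hom ≫ (𝟙 Y + n')) ≫ t'.1.2.2 = h0 ⟨t'.1.1, hf t'⟩ := by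
      rw [Category.assoc, ← he2]; simp [hn2']
    have b1 : t.1.2.1 = t'.1.2.1 := by rw [← a1, ← a1', h2]; simp only [h1]
    have b2 : t.1.2.2 = t'.1.2.2 := by
      have i1 := isIso_one_add_Y t'.2 n' hn1' hn2'
      rw [← cancel_epi ((e t').hom ≫ (𝟙 Y + n')), a2', ← h2, a2]; simp only [h1]
    obtain rfl : t = t' := Subtype.ext (Prod.ext h1 (Prod.ext b1 b2))
    obtain rfl : n = n' := by
      have := (cancel_epi (e t).hom).1 h2
      simpa using this
    rfl
  · rintro ⟨⟨f, hf'⟩, (a : Y ≅ Y)⟩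
    let t : Tri X L Y := ⟨(f, g0 ⟨f, hf'⟩ ≫ a.hom, a.inv ≫ h0 ⟨f, hf'⟩),
      (H0 ⟨f, hf'⟩).of_iso (Iso.refl _) (Iso.refl _) a (by simp) (by simp) (by simp)⟩
    have k1 : g0 ⟨f, hf'⟩ ≫ (e t).hom = g0 ⟨f, hf'⟩ ≫ a.hom := he1 t
    have k2 : (e t).hom ≫ a.inv ≫ h0 ⟨f, hf'⟩ = h0 ⟨f, hf'⟩ := he2 t
    refine ⟨⟨t, (e t).inv ≫ a.hom - 𝟙 Y, ?_, ?_⟩, ?_⟩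
    · change (g0 ⟨f, hf'⟩ ≫ a.hom) ≫ _ = 0
      have k3 : g0 ⟨f, hf'⟩ ≫ a.hom ≫ (e t).inv = g0 ⟨f, hf'⟩ := by
        rw [← Category.assoc, ← k1]; simp
      simp [reassoc_of% k3]
    · change _ ≫ a.inv ≫ h0 ⟨f, hf'⟩ = 0
      rw [Preadditive.sub_comp, sub_eq_zero, ← cancel_epi (e t).hom]
      simp [k2]
    · refine Prod.ext rfl (Iso.ext ?_)
      change (e t).hom ≫ (𝟙 Y + ((e t).inv ≫ a.hom - 𝟙 Y)) = a.hom
      simp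

lemma card_SL (X L Y : C) : Nat.card (Σ t : Tri X L Y, SL t) =
    Nat.card {h : Y ⟶ X⟦(1 : ℤ)⟧ // FibIs h L} * Nat.card (Aut L) := by
  have hch : ∀ h : {h : Y ⟶ X⟦(1 : ℤ)⟧ // FibIs h L}, ∃ (f : X ⟶ L) (g : L ⟶ Y),
    Dist f g h.1 := fun f => f.2
  choose f0 g0 H0 using hch
  have hf : ∀ t : Tri X L Y, FibIs t.1.2.2 L := fun t => ⟨_, _, t.2⟩
  choose e he1 he2 using fun t : Tri X L Y => (H0 ⟨t.1.2.2, hf t⟩).ex2 t.2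
  rw [← Nat.card_prod]
  let φ : (Σ t : Tri X L Y, SL t) → {h : Y ⟶ X⟦(1 : ℤ)⟧ // FibIs h L} × Aut L := fun p =>
    (⟨p.1.1.2.2, hf p.1⟩,
      (e p.1) ≪≫ @asIso _ _ _ _ (𝟙 L + p.2.1) (isIso_one_add_L p.1.2 p.2.1 p.2.2.1 p.2.2.2))
  refine Nat.card_eq_of_bijective φ ⟨?_, ?_⟩
  · rintro ⟨t, n, hn1, hn2⟩ ⟨t', n', hn1', hn2'⟩ heq
    have h1 : t.1.2.2 = t'.1.2.2 := congrArg (fun z => z.1.1) heq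
    have h2 : (e t).hom ≫ (𝟙 L + n) = (e t').hom ≫ (𝟙 L + n') := congrArg (fun z => z.2.hom) heq
    have a1 : f0 ⟨t.1.2.2, hf t⟩ ≫ (e t).hom ≫ (𝟙 L + n) = t.1.1 := by
      rw [← Category.assoc, he1]; simp [hn1]
    have a1' : f0 ⟨t'.1.2.2, hf t'⟩ ≫ (e t').hom ≫ (𝟙 L + n') = t'.1.1 := by
      rw [← Category.assoc, he1]; simp [hn1']
    have a2 : ((e t).hom ≫ (𝟙 L + n)) ≫ t.1.2.1 = g0 ⟨t.1.2.2, hf t⟩ := by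
      rw [Category.assoc, ← he2]; simp [hn2]
    have a2' : ((e t').hom ≫ (𝟙 L + n')) ≫ t'.1.2.1 = g0 ⟨t'.1.2.2, hf t'⟩ := by
      rw [Category.assoc, ← he2]; simp [hn2']
    have b1 : t.1.1 = t'.1.1 := by rw [← a1, ← a1', h2]; simp only [h1]
    have b2 : t.1.2.1 = t'.1.2.1 := by
      have i1 := isIso_one_add_L t'.2 n' hn1' hn2'
      rw [← cancel_epi ((e t').hom ≫ (𝟙 L + n')), a2', ← h2, a2]; simp only [h1]
    obtain rfl : t = t' := Subtype.ext (Prod.ext b1 (Prod.ext b2 h1))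
    obtain rfl : n = n' := by
      have := (cancel_epi (e t).hom).1 h2
      simpa using this
    rfl
  · rintro ⟨⟨f, hf'⟩, (a : L ≅ L)⟩
    let t : Tri X L Y := ⟨(f0 ⟨f, hf'⟩ ≫ a.hom, a.inv ≫ g0 ⟨f, hf'⟩, f),
      (H0 ⟨f, hf'⟩).of_iso (Iso.refl _) a (Iso.refl _) (by simp) (by simp) (by simp)⟩
    have k1 : f0 ⟨f, hf'⟩ ≫ (e t).hom = f0 ⟨f, hf'⟩ ≫ a.hom := he1 t
    have k2 : (e t).hom ≫ a.inv ≫ g0 ⟨f, hf'⟩ = g0 ⟨f, hf'⟩ := he2 t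
    refine ⟨⟨t, (e t).inv ≫ a.hom - 𝟙 L, ?_, ?_⟩, ?_⟩
    · change (f0 ⟨f, hf'⟩ ≫ a.hom) ≫ _ = 0
      have k3 : f0 ⟨f, hf'⟩ ≫ a.hom ≫ (e t).inv = f0 ⟨f, hf'⟩ := by
        rw [← Category.assoc, ← k1]; simp
      simp [reassoc_of% k3]
    · change _ ≫ a.inv ≫ g0 ⟨f, hf'⟩ = 0
      rw [Preadditive.sub_comp, sub_eq_zero, ← cancel_epi (e t).hom]
      simp [k2]
    · refine Prod.ext rfl (Iso.ext ?_)
      change (e t).hom ≫ (𝟙 L + ((e t).inv ≫ a.hom - 𝟙 L)) = a.hom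
      simp

lemma SL_SY {X L Y : C} (t : Tri X L Y) :
    Nat.card (SL t) * Nat.card {r : Y ⟶ L // t.1.2.1 ≫ r = 0} =
      Nat.card (SY t) * Nat.card {r : Y ⟶ L // r ≫ t.1.2.1 = 0} := by
  obtain ⟨⟨f, g, h⟩, H⟩ := t
  change Dist f g h at H
  have e1 := cnt (Preadditive.leftComp L g) (fun r : Y ⟶ L => g ≫ r ≫ g = 0)
    (fun n : L ⟶ L => f ≫ n = 0 ∧ n ≫ g = 0) (fun r => by
      change _ ↔ f ≫ g ≫ r = 0 ∧ (g ≫ r) ≫ g = 0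
      simp [← Category.assoc, H.z12]) (fun n hn => by
      obtain ⟨y, hy⟩ := H.y2 n hn.1
      exact ⟨y, hy.symm⟩)
  have e2 := cnt (Preadditive.rightComp Y g) (fun r : Y ⟶ L => g ≫ r ≫ g = 0)
    (fun n : Y ⟶ Y => g ≫ n = 0 ∧ n ≫ h = 0) (fun r => by
      change _ ↔ g ≫ r ≫ g = 0 ∧ (r ≫ g) ≫ h = 0
      simp [H.z23]) (fun n hn => by
      obtain ⟨y, hy⟩ := H.c3 n hn.2
      exact ⟨y, hy.symm⟩)
  exact e1.symm.trans e2

lemma exists_common (hB : ∀ X Y : C, ∃ N : ℕ, Bdd N X Y)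
    (P Q R P' Q' R' : C) :
    ∃ N, Bdd N P P' ∧ Bdd N Q Q' ∧ Bdd N R R' := by
  obtain ⟨a, ha⟩ := hB P P'
  obtain ⟨b, hb⟩ := hB Q Q'
  obtain ⟨c, hc⟩ := hB R R'
  exact ⟨a + b + c, ha.mono (by omega), hb.mono (by omega), hc.mono (by omega)⟩

lemma LesY (hB : ∀ X Y : C, ∃ N : ℕ, Bdd N X Y)
    {X Y Z : C} {f : X ⟶ Y} {g : Y ⟶ Z} {h : Z ⟶ X⟦(1 : ℤ)⟧} (H : Dist f g h) (W : C) :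
    (Nat.card {x : Z ⟶ W // g ≫ x = 0} : ℚ) * homAlternatingProd Z W * homAlternatingProd X W =
      homAlternatingProd Y W := by
  obtain ⟨N, h1, h2, h3⟩ := exists_common hB X Y Z W W W
  exact lesY W N H h1 h2 h3

lemma LesC (hB : ∀ X Y : C, ∃ N : ℕ, Bdd N X Y)
    {X Y Z : C} {f : X ⟶ Y} {g : Y ⟶ Z} {h : Z ⟶ X⟦(1 : ℤ)⟧} (H : Dist f g h) (W : C) :
    (Nat.card {x : W ⟶ X // x ≫ f = 0} : ℚ) * homAlternatingProd W X * homAlternatingProd W Z =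
      homAlternatingProd W Y := by
  obtain ⟨N, h1, h2, h3⟩ := exists_common hB W W W X Y Z
  exact lesC W N H h1 h2 h3

lemma Hap_ne (hB : ∀ X Y : C, ∃ N : ℕ, Bdd N X Y)
    (X Y : C) : homAlternatingProd X Y ≠ 0 := by
  obtain ⟨N, hN⟩ := hB X Y
  exact hap_ne_zero hN

lemma riedtmann (hB : ∀ X Y : C, ∃ N : ℕ, Bdd N X Y)
    (X L Y : C) :
    (Nat.card {h : Y ⟶ X⟦(1 : ℤ)⟧ // FibIs h L} : ℚ) * Nat.card (Aut L) * homAlternatingProd L L *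
      homAlternatingProd Y (X⟦(1 : ℤ)⟧) =
    (Nat.card {f : X ⟶ L // ConeIs f Y} : ℚ) * Nat.card (Aut Y) * homAlternatingProd Y Y *
      homAlternatingProd X L := by
  have : Fintype (Tri X L Y) := Fintype.ofFinite _
  have e1 := congrArg (Nat.cast (R := ℚ)) (card_SL X L Y)
  have e2 := congrArg (Nat.cast (R := ℚ)) (card_SY X L Y)
  rw [Nat.card_sigma] at e1 e2
  push_cast at e1 e2
  rw [← e1, ← e2]
  simp only [Finset.sum_mul]
  refine Finset.sum_congr rfl (fun t _ => ?_)
  have h1 := congrArg (Nat.cast (R := ℚ)) (SL_SY t)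
  push_cast at h1
  have h2 := LesY hB t.2 L
  have h3 := LesC hB (Dist.rot t.2) Y
  have n1 := Hap_ne hB Y L
  generalize (Nat.card (SL t) : ℚ) = sl at *
  generalize (Nat.card (SY t) : ℚ) = sy at *
  generalize (Nat.card {r : Y ⟶ L // t.1.2.1 ≫ r = 0} : ℚ) = K1 at *
  generalize (Nat.card {r : Y ⟶ L // r ≫ t.1.2.1 = 0} : ℚ) = K2 at *
  rw [← h2, ← h3]
  linear_combination (homAlternatingProd Y L * homAlternatingProd X L *
    homAlternatingProd Y (X⟦(1 : ℤ)⟧)) * h1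

/-- the order of the derived automorphism group -/
noncomputable def aa (X : C) : ℚ := Nat.card (Aut X) * homAlternatingProd X X

lemma aa_ne (hB : ∀ X Y : C, ∃ N : ℕ, Bdd N X Y)
    (X : C) : aa X ≠ 0 := by
  have : (Nat.card (Aut X) : ℚ) ≠ 0 := by
    have : Nonempty (Aut X) := ⟨Iso.refl X⟩
    exact_mod_cast Nat.card_pos.ne'
  exact mul_ne_zero this (Hap_ne hB X X)

lemma hall_eq (hB : ∀ X Y : C, ∃ N : ℕ, Bdd N X Y)
    (X Y L : C) : hallNumber X Y L =
    (Nat.card {h : Y ⟶ X⟦(1 : ℤ)⟧ // FibIs h L} : ℚ) * homAlternatingProd Y (X⟦(1 : ℤ)⟧) * aa L /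
      (aa X * aa Y) := by
  have h1 := riedtmann hB X L Y
  have nX := aa_ne hB X
  have nY := aa_ne hB Y
  have : hallNumber X Y L =
    (Nat.card {f : X ⟶ L // ConeIs f Y} : ℚ) * homAlternatingProd X L / aa X := rfl
  rw [this, div_eq_div_iff nX (mul_ne_zero nX nY)]
  simp only [aa] at *
  linear_combination -((Nat.card (Aut X)) * homAlternatingProd X X) * h1

end

section
variable {C : Type u} [CategoryTheory.Category.{v} C] [Preadditive C]
    [HasZeroObject C] [HasBinaryBiproducts C] [HasShift C ℤ]
    [∀ i : ℤ, (CategoryTheory.shiftFunctor C i).Additive] [Pretriangulated C]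

lemma dist_inl_snd (A B : C) : Dist (biprod.inl : A ⟶ A ⊞ B) biprod.snd 0 :=
  binaryBiproductTriangle_distinguished A B

lemma dist_inr_fst (A B : C) : Dist (biprod.inr : B ⟶ A ⊞ B) biprod.fst 0 :=
  (dist_inl_snd B A).of_iso (Iso.refl _) (biprod.braiding B A) (Iso.refl _)
    (by apply biprod.hom_ext <;> simp) (by simp) (by simp)

lemma neg_shift {A B : C} (f : A ⟶ B) : (-f)⟦(1 : ℤ)⟧' = -f⟦(1 : ℤ)⟧' :=
  Functor.map_neg _

lemma shift_inj {A B : C} {f g : A ⟶ B} (h : f⟦(1 : ℤ)⟧' = g⟦(1 : ℤ)⟧') : f = g :=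
  (shiftFunctor C (1 : ℤ)).map_injective h

/-- negation as an isomorphism -/
def negIso (A : C) : A ≅ A := ⟨-𝟙 A, -𝟙 A, by simp, by simp⟩

/-- shifting a triangle, with signs concentrated in one place -/
lemma Dist.sh2 {X Y Z : C} {f : X ⟶ Y} {g : Y ⟶ Z} {h : Z ⟶ X⟦(1 : ℤ)⟧} (H : Dist f g h) :
    Dist (g⟦(1 : ℤ)⟧') (h⟦(1 : ℤ)⟧') (f⟦(1 : ℤ)⟧'⟦(1 : ℤ)⟧') := by
  refine H.rot.rot.rot.rot.of_iso (Iso.refl _) (negIso _) (Iso.refl _) ?_ ?_ ?_ <;>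
    simp [negIso]

lemma Dist.sh1 {X Y Z : C} {f : X ⟶ Y} {g : Y ⟶ Z} {h : Z ⟶ X⟦(1 : ℤ)⟧} (H : Dist f g h) :
    Dist (-f⟦(1 : ℤ)⟧') (-g⟦(1 : ℤ)⟧') (-h⟦(1 : ℤ)⟧') := H.rot.rot.rot

lemma octa [IsTriangulated C] {X₁ X₂ X₃ Z₁₂ Z₂₃ Z₁₃ : C}
    {u : X₁ ⟶ X₂} {v : X₂ ⟶ X₃} {w : X₁ ⟶ X₃} (comm : u ≫ v = w)
    {v₁₂ : X₂ ⟶ Z₁₂} {w₁₂ : Z₁₂ ⟶ X₁⟦(1 : ℤ)⟧} (h₁₂ : Dist u v₁₂ w₁₂)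
    {v₂₃ : X₃ ⟶ Z₂₃} {w₂₃ : Z₂₃ ⟶ X₂⟦(1 : ℤ)⟧} (h₂₃ : Dist v v₂₃ w₂₃)
    {v₁₃ : X₃ ⟶ Z₁₃} {w₁₃ : Z₁₃ ⟶ X₁⟦(1 : ℤ)⟧} (h₁₃ : Dist w v₁₃ w₁₃) :
    ∃ (m₁ : Z₁₂ ⟶ Z₁₃) (m₃ : Z₁₃ ⟶ Z₂₃), v₁₂ ≫ m₁ = v ≫ v₁₃ ∧
      w₁₃ ≫ u⟦(1 : ℤ)⟧' = m₃ ≫ w₂₃ ∧ Dist m₁ m₃ (w₂₃ ≫ v₁₂⟦(1 : ℤ)⟧') := by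
  obtain ⟨o⟩ := IsTriangulated.octahedron_axiom comm h₁₂ h₂₃ h₁₃
  exact ⟨o.m₁, o.m₃, o.comm₁, o.comm₄, o.mem⟩

/-- the homotopy-cartesian relation -/
def Rel {Y L Z L' : C} (p : L ⟶ Y) (j : Z ⟶ L') (β : L ⟶ Z⟦(1 : ℤ)⟧) (β' : Y ⟶ L'⟦(1 : ℤ)⟧) :
    Prop :=
  ∃ d, Dist (biprod.lift p β) (biprod.desc β' (-j⟦(1 : ℤ)⟧')) d

lemma Rel.add {Y L Z L' : C} {p : L ⟶ Y} {j : Z ⟶ L'} {β : L ⟶ Z⟦(1 : ℤ)⟧}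
    {β' : Y ⟶ L'⟦(1 : ℤ)⟧} (h : Rel p j β β') (η : Y ⟶ Z⟦(1 : ℤ)⟧) :
    Rel p j (β + p ≫ η) (β' + η ≫ j⟦(1 : ℤ)⟧') := by
  obtain ⟨d, H⟩ := h
  refine ⟨d, H.of_iso (Iso.refl _)
    ⟨𝟙 _ + biprod.fst ≫ η ≫ biprod.inr, 𝟙 _ - biprod.fst ≫ η ≫ biprod.inr, ?_, ?_⟩
    (Iso.refl _) ?_ ?_ ?_⟩
  · simp [Preadditive.add_comp, Preadditive.comp_sub]
  · simp [Preadditive.sub_comp, Preadditive.comp_add]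
  · apply biprod.hom_ext <;> simp
  · apply biprod.hom_ext' <;> simp
  · simp

variable [IsTriangulated C]

lemma Rel.fib {Y L Z L' M : C} {p : L ⟶ Y} {j : Z ⟶ L'} {β : L ⟶ Z⟦(1 : ℤ)⟧}
    {β' : Y ⟶ L'⟦(1 : ℤ)⟧} (h : Rel p j β β') (hM : FibIs β M) : FibIs β' M := by
  obtain ⟨d, H⟩ := h
  obtain ⟨f', g', HM⟩ := hM
  obtain ⟨m₁, m₃, -, -, H'⟩ := octa (u := biprod.lift p β) (v := biprod.snd) (w := β) (by simp)
    H (dist_inl_snd _ _).rot HM.rot.rot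
  refine Dist.unshift (m₁ := m₁) (m₃ := m₃) ?_
  convert H' using 1
  rw [Preadditive.neg_comp, ← Functor.map_comp, biprod.inl_desc]

lemma Rel.fib_iff {Y L Z L' M : C} {p : L ⟶ Y} {j : Z ⟶ L'} {β : L ⟶ Z⟦(1 : ℤ)⟧}
    {β' : Y ⟶ L'⟦(1 : ℤ)⟧} (h : Rel p j β β') : FibIs β M ↔ FibIs β' M := by
  refine ⟨h.fib, fun hM => ?_⟩
  obtain ⟨M', hM'⟩ := exists_fib β
  obtain ⟨e⟩ := (h.fib hM').uniq hM
  exact hM'.iso e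

lemma exists_rel {X Y L Z L' : C} {i : X ⟶ L} {p : L ⟶ Y} {α : Y ⟶ X⟦(1 : ℤ)⟧} (H : Dist i p α)
    {j : Z ⟶ L'} {q : L' ⟶ X} {γ : X ⟶ Z⟦(1 : ℤ)⟧} (H' : Dist j q γ)
    (β : L ⟶ Z⟦(1 : ℤ)⟧) (hβ : i ≫ β = γ) :
    ∃ β' : Y ⟶ L'⟦(1 : ℤ)⟧, β' ≫ q⟦(1 : ℤ)⟧' = α ∧ Rel p j β β' := by
  obtain ⟨W, w, d, Hw⟩ := exists_cone (biprod.lift p β)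
  obtain ⟨m₁, m₃, c1, c4, Hm⟩ := octa (u := biprod.lift p β) (v := biprod.fst) (w := p) (by simp)
    Hw (dist_inr_fst _ _).rot H.rot
  have hm : m₃ = γ⟦(1 : ℤ)⟧' := by
    have := congrArg (fun z => z ≫ (biprod.snd : Y ⊞ Z⟦(1 : ℤ)⟧ ⟶ _)⟦(1 : ℤ)⟧') c4
    simp only [Preadditive.neg_comp, Preadditive.comp_neg, Category.assoc, ← Functor.map_comp,
      biprod.lift_snd, biprod.inr_snd, hβ, neg_inj] at this
    simpa using this.symm
  subst hm
  obtain ⟨c, hc1, hc2⟩ := Hm.ex1 H'.sh2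
  have hj : biprod.inr ≫ w ≫ c.hom = -j⟦(1 : ℤ)⟧' := by
    apply shift_inj
    rw [neg_shift, ← hc2]
    simp
  have e : biprod.desc (biprod.inl ≫ w ≫ c.hom) (-j⟦(1 : ℤ)⟧') = w ≫ c.hom := by
    rw [← hj]; apply biprod.hom_ext' <;> simp
  refine ⟨biprod.inl ≫ w ≫ c.hom, ?_, c.inv ≫ d, ?_⟩
  · simp [hc1, c1]
  · rw [e]
    exact Hw.of_iso (Iso.refl _) (Iso.refl _) c (by simp) (by simp) (by simp)

end

lemma card_split {A B : Type*} [Finite A] [Fintype B] (P : A → Prop) (f : A → B) :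
    Nat.card {x // P x} = ∑ b : B, Nat.card {x // f x = b ∧ P x} := by
  classical
  have := Fintype.ofFinite A
  simp only [Nat.card_eq_fintype_card, Fintype.card_subtype]
  rw [Finset.card_eq_sum_card_fiberwise (f := f) (t := Finset.univ) (by simp [Set.MapsTo])]
  refine Finset.sum_congr rfl fun b _ => ?_
  rw [Finset.filter_filter]
  congr 1
  ext x
  simp [and_comm]

section
variable {C : Type u} [CategoryTheory.Category.{v} C] [Preadditive C]
    [HasZeroObject C] [HasBinaryBiproducts C] [HasShift C ℤ]
    [∀ i : ℤ, (CategoryTheory.shiftFunctor C i).Additive] [Pretriangulated C]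

lemma card_fib_congr {X X' Y Y' L L' : C} (a : X ≅ X') (b : Y ≅ Y') (e : L ≅ L') :
    Nat.card {h : Y ⟶ X⟦(1 : ℤ)⟧ // FibIs h L} = Nat.card {h : Y' ⟶ X'⟦(1 : ℤ)⟧ // FibIs h L'} := by
  refine Nat.card_congr (Equiv.subtypeEquiv
    (Iso.homCongr b ((shiftFunctor C (1 : ℤ)).mapIso a)) fun w => ⟨fun H => ?_, fun H => ?_⟩)
  · exact H.transport a b e (by simp [Iso.homCongr])
  · exact H.transport a.symm b.symm e.symm (by simp [Iso.homCongr])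

lemma aa_congr {X X' : C} (a : X ≅ X') : aa X = aa X' := by
  unfold aa
  rw [hap_congr a a, Nat.card_congr a.conjAut.toEquiv]

lemma out_iso (F : C) : Nonempty (F ≅ (Quotient.mk (isIsomorphicSetoid C) F).out) := by
  have h : (isIsomorphicSetoid C).r F (Quotient.mk (isIsomorphicSetoid C) F).out :=
    Quotient.exact (Quotient.out_eq (Quotient.mk (isIsomorphicSetoid C) F)).symm
  exact h

lemma ne_class {A : C} {q : Quotient (isIsomorphicSetoid C)}
    (h : q ≠ Quotient.mk (isIsomorphicSetoid C) A) : IsEmpty (A ≅ q.out) := by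
  refine ⟨fun e => h ?_⟩
  conv_lhs => rw [← Quotient.out_eq q]
  exact Quotient.sound ⟨e.symm⟩

lemma fib_class {X Y : C} {α : Y ⟶ X⟦(1 : ℤ)⟧} {F : C} (hF : FibIs α F)
    (q : Quotient (isIsomorphicSetoid C)) :
    FibIs α q.out ↔ Quotient.mk (isIsomorphicSetoid C) F = q := by
  constructor
  · intro h
    conv_rhs => rw [← Quotient.out_eq q]
    exact Quotient.sound (hF.uniq h)
  · rintro rfl
    obtain ⟨e⟩ := out_iso F
    exact hF.iso e

lemma fib_finite {X Y : C} [Finite (Y ⟶ X⟦(1 : ℤ)⟧)] :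
    {q : Quotient (isIsomorphicSetoid C) |
      Nat.card {α : Y ⟶ X⟦(1 : ℤ)⟧ // FibIs α q.out} ≠ 0}.Finite := by
  choose F hF using fun α : Y ⟶ X⟦(1 : ℤ)⟧ => exists_fib α
  refine (Set.finite_range (fun α => Quotient.mk (isIsomorphicSetoid C) (F α))).subset ?_
  intro q hq
  obtain ⟨⟨α, hα⟩⟩ := (Nat.card_ne_zero.1 hq).1
  exact ⟨α, (fib_class (hF α) q).1 hα⟩

lemma sum_lemma {X Y : C} [Fintype (Y ⟶ X⟦(1 : ℤ)⟧)] (G : C → ℚ)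
    (hG : ∀ L L' : C, (L ≅ L') → G L = G L')
    (F : (Y ⟶ X⟦(1 : ℤ)⟧) → C) (hF : ∀ α, FibIs α (F α)) :
    ∑ᶠ q : Quotient (isIsomorphicSetoid C),
      (Nat.card {α : Y ⟶ X⟦(1 : ℤ)⟧ // FibIs α q.out} : ℚ) * G q.out = ∑ α, G (F α) := by
  classical
  have h1 : ∀ α, G (F α) = (fun q : Quotient (isIsomorphicSetoid C) => G q.out)
      (Quotient.mk (isIsomorphicSetoid C) (F α)) := by
    intro α
    obtain ⟨e⟩ := out_iso (F α)
    exact hG _ _ e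
  simp only [h1]
  rw [Finset.sum_comp (fun q : Quotient (isIsomorphicSetoid C) => G q.out)
    (fun α => Quotient.mk (isIsomorphicSetoid C) (F α))]
  have h2 : ∀ q : Quotient (isIsomorphicSetoid C),
      Nat.card {α : Y ⟶ X⟦(1 : ℤ)⟧ // FibIs α q.out} =
      (Finset.univ.filter fun α => Quotient.mk (isIsomorphicSetoid C) (F α) = q).card := by
    intro q
    rw [Nat.card_congr (Equiv.subtypeEquivRight fun α => fib_class (hF α) q),
      Nat.card_eq_fintype_card, Fintype.card_subtype]
  rw [finsum_eq_sum_of_support_subset (s := Finset.univ.image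
    (fun α => Quotient.mk (isIsomorphicSetoid C) (F α)))]
  · refine Finset.sum_congr rfl fun q _ => ?_
    rw [h2, nsmul_eq_mul]
  · intro q hq
    have : Nat.card {α : Y ⟶ X⟦(1 : ℤ)⟧ // FibIs α q.out} ≠ 0 := by
      intro h0
      apply hq
      simp only [h0, Nat.cast_zero, zero_mul]
    obtain ⟨⟨α, hα⟩⟩ := (Nat.card_ne_zero.1 this).1
    simp only [Finset.coe_image, Finset.coe_univ, Set.image_univ]
    exact ⟨α, (fib_class (hF α) q).1 hα⟩

variable [IsTriangulated C] [∀ X Y : C, Finite (X ⟶ Y)]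

lemma NN {X Y L Z L' : C} {i : X ⟶ L} {p : L ⟶ Y} {α : Y ⟶ X⟦(1 : ℤ)⟧} (H : Dist i p α)
    {j : Z ⟶ L'} {q : L' ⟶ X} {γ : X ⟶ Z⟦(1 : ℤ)⟧} (H' : Dist j q γ) (M : C) :
    Nat.card {β : L ⟶ Z⟦(1 : ℤ)⟧ // i ≫ β = γ ∧ FibIs β M} *
        Nat.card {η : Y ⟶ Z⟦(1 : ℤ)⟧ // p ≫ η = 0} =
      Nat.card {β' : Y ⟶ L'⟦(1 : ℤ)⟧ // β' ≫ q⟦(1 : ℤ)⟧' = α ∧ FibIs β' M} *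
        Nat.card {η : Y ⟶ Z⟦(1 : ℤ)⟧ // η ≫ j⟦(1 : ℤ)⟧' = 0} := by
  have hqj : j⟦(1 : ℤ)⟧' ≫ q⟦(1 : ℤ)⟧' = 0 := by rw [← Functor.map_comp, H'.z12]; simp
  by_cases hex : ∃ β, i ≫ β = γ
  · obtain ⟨β, hβ⟩ := hex
    obtain ⟨β', hβ', R⟩ := exists_rel H H' β hβ
    have e1 := cnt (Preadditive.leftComp (Z⟦(1 : ℤ)⟧) p) (fun η => FibIs (β + p ≫ η) M)
      (fun y => i ≫ y = 0 ∧ FibIs (β + y) M)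
      (fun η => by
        change _ ↔ i ≫ p ≫ η = 0 ∧ FibIs (β + p ≫ η) M
        simp [← Category.assoc, H.z12])
      (fun y hy => by
        obtain ⟨z, hz⟩ := H.y2 y hy.1
        exact ⟨z, hz.symm⟩)
    have e2 := cnt (Preadditive.rightComp Y (j⟦(1 : ℤ)⟧'))
      (fun η => FibIs (β' + η ≫ j⟦(1 : ℤ)⟧') M)
      (fun y => y ≫ q⟦(1 : ℤ)⟧' = 0 ∧ FibIs (β' + y) M)
      (fun η => by
        change _ ↔ (η ≫ j⟦(1 : ℤ)⟧') ≫ q⟦(1 : ℤ)⟧' = 0 ∧ FibIs (β' + η ≫ j⟦(1 : ℤ)⟧') M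
        simp [hqj])
      (fun y hy => by
        obtain ⟨z, hz⟩ := H'.sh1.c2 y (by simp [hy.1])
        refine ⟨-z, ?_⟩
        change (-z) ≫ _ = y
        simp [hz])
    have e3 : Nat.card {η // FibIs (β + p ≫ η) M} = Nat.card {η // FibIs (β' + η ≫ j⟦(1 : ℤ)⟧') M} :=
      Nat.card_congr (Equiv.subtypeEquivRight fun η => (R.add η).fib_iff)
    have e4 : Nat.card {y // i ≫ y = 0 ∧ FibIs (β + y) M} =
        Nat.card {β : L ⟶ Z⟦(1 : ℤ)⟧ // i ≫ β = γ ∧ FibIs β M} :=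
      Nat.card_congr (Equiv.subtypeEquiv (Equiv.addLeft β) fun y => by simp [hβ])
    have e5 : Nat.card {y // y ≫ q⟦(1 : ℤ)⟧' = 0 ∧ FibIs (β' + y) M} =
        Nat.card {β' : Y ⟶ L'⟦(1 : ℤ)⟧ // β' ≫ q⟦(1 : ℤ)⟧' = α ∧ FibIs β' M} :=
      Nat.card_congr (Equiv.subtypeEquiv (Equiv.addLeft β') fun y => by simp [hβ'])
    rw [e4] at e1
    rw [e5] at e2
    exact e1.symm.trans (e3.trans e2)
  · have h1 : IsEmpty {β : L ⟶ Z⟦(1 : ℤ)⟧ // i ≫ β = γ ∧ FibIs β M} :=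
      ⟨fun b => hex ⟨b.1, b.2.1⟩⟩
    have h2 : IsEmpty {β' : Y ⟶ L'⟦(1 : ℤ)⟧ // β' ≫ q⟦(1 : ℤ)⟧' = α ∧ FibIs β' M} := by
      refine ⟨fun b => hex ?_⟩
      have h0 : α ≫ γ⟦(1 : ℤ)⟧' = 0 := by
        rw [← b.2.1, Category.assoc, ← Functor.map_comp, H'.z23]; simp
      obtain ⟨y, hy⟩ := H.rot.rot.y2 _ h0
      obtain ⟨y, rfl⟩ := (shiftFunctor C (1 : ℤ)).map_surjective y
      refine ⟨-y, shift_inj ?_⟩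
      rw [hy]; simp
    rw [@Nat.card_of_isEmpty _ h1, @Nat.card_of_isEmpty _ h2]; simp

lemma NQ (hB : ∀ X Y : C, ∃ N : ℕ, Bdd N X Y)
    {X Y L Z L' : C} {i : X ⟶ L} {p : L ⟶ Y} {α : Y ⟶ X⟦(1 : ℤ)⟧} (H : Dist i p α)
    {j : Z ⟶ L'} {q : L' ⟶ X} {γ : X ⟶ Z⟦(1 : ℤ)⟧} (H' : Dist j q γ) (M : C) :
    (Nat.card {β : L ⟶ Z⟦(1 : ℤ)⟧ // i ≫ β = γ ∧ FibIs β M} : ℚ) *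
        (homAlternatingProd L (Z⟦(1 : ℤ)⟧) * homAlternatingProd Y (X⟦(1 : ℤ)⟧)) =
      (Nat.card {β' : Y ⟶ L'⟦(1 : ℤ)⟧ // β' ≫ q⟦(1 : ℤ)⟧' = α ∧ FibIs β' M} : ℚ) *
        (homAlternatingProd Y (L'⟦(1 : ℤ)⟧) * homAlternatingProd X (Z⟦(1 : ℤ)⟧)) := by
  have e := NN H H' M
  have e' := congrArg (Nat.cast (R := ℚ)) e
  push_cast at e'
  have e1 := LesY hB H (Z⟦(1 : ℤ)⟧)
  have e2 := LesC hB H'.sh1 Y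
  have e3 : Nat.card {x : Y ⟶ Z⟦(1 : ℤ)⟧ // x ≫ (-j⟦(1 : ℤ)⟧') = 0} =
      Nat.card {η : Y ⟶ Z⟦(1 : ℤ)⟧ // η ≫ j⟦(1 : ℤ)⟧' = 0} :=
    Nat.card_congr (Equiv.subtypeEquivRight fun x => by simp)
  rw [e3] at e2
  rw [← e1, ← e2]
  linear_combination (homAlternatingProd Y (Z⟦(1 : ℤ)⟧) * homAlternatingProd X (Z⟦(1 : ℤ)⟧) *
    homAlternatingProd Y (X⟦(1 : ℤ)⟧)) * e'

lemma hall_congr (hB : ∀ X Y : C, ∃ N : ℕ, Bdd N X Y) {X X' Y Y' L L' : C}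
    (a : X ≅ X') (b : Y ≅ Y') (e : L ≅ L') : hallNumber X Y L = hallNumber X' Y' L' := by
  rw [hall_eq hB, hall_eq hB, card_fib_congr a b e, aa_congr a, aa_congr b, aa_congr e,
    hap_congr b ((shiftFunctor C (1 : ℤ)).mapIso a)]

lemma hall_finite (hB : ∀ X Y : C, ∃ N : ℕ, Bdd N X Y) (A B : C) :
    (Function.support (fun q : Quotient (isIsomorphicSetoid C) =>
        hallNumber A B (Quotient.out q))).Finite := by
  refine (fib_finite (X := A) (Y := B)).subset fun q hq h0 => hq ?_
  simp only
  rw [hall_eq hB, h0]; simp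

lemma assoc (hB : ∀ X Y : C, ∃ N : ℕ, Bdd N X Y) (X Y Z M : C) :
    (∑ᶠ q : Quotient (isIsomorphicSetoid C),
        hallNumber X Y (Quotient.out q) * hallNumber Z (Quotient.out q) M) =
      (∑ᶠ q : Quotient (isIsomorphicSetoid C),
        hallNumber Z X (Quotient.out q) * hallNumber (Quotient.out q) Y M) := by
  classical
  have : Fintype (Y ⟶ X⟦(1 : ℤ)⟧) := Fintype.ofFinite _
  have : Fintype (X ⟶ Z⟦(1 : ℤ)⟧) := Fintype.ofFinite _
  choose F i p HF using fun α : Y ⟶ X⟦(1 : ℤ)⟧ => exists_fib α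
  choose F' j q HF' using fun γ : X ⟶ Z⟦(1 : ℤ)⟧ => exists_fib γ
  set K : ℚ := aa M / (aa X * aa Y * aa Z) with hK
  let G : C → ℚ := fun L => K * ((Nat.card {β : L ⟶ Z⟦(1 : ℤ)⟧ // FibIs β M} : ℚ) *
    (homAlternatingProd L (Z⟦(1 : ℤ)⟧) * homAlternatingProd Y (X⟦(1 : ℤ)⟧)))
  let G' : C → ℚ := fun L => K * ((Nat.card {β : Y ⟶ L⟦(1 : ℤ)⟧ // FibIs β M} : ℚ) *
    (homAlternatingProd Y (L⟦(1 : ℤ)⟧) * homAlternatingProd X (Z⟦(1 : ℤ)⟧)))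
  have hG : ∀ L L' : C, (L ≅ L') → G L = G L' := fun L L' e => by
    simp only [G]
    rw [card_fib_congr (Iso.refl Z) e (Iso.refl M), hap_congr e (Iso.refl _)]
  have hG' : ∀ L L' : C, (L ≅ L') → G' L = G' L' := fun L L' e => by
    simp only [G']
    rw [card_fib_congr e (Iso.refl Y) (Iso.refl M),
      hap_congr (Iso.refl Y) ((shiftFunctor C (1 : ℤ)).mapIso e)]
  have hX := aa_ne hB X
  have hY := aa_ne hB Y
  have hZ := aa_ne hB Z
  have t1 : ∀ L : C, hallNumber X Y L * hallNumber Z L M =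
      (Nat.card {α : Y ⟶ X⟦(1 : ℤ)⟧ // FibIs α L} : ℚ) * G L := fun L => by
    have hL := aa_ne hB L
    rw [hall_eq hB, hall_eq hB]
    simp only [G, hK]
    field_simp
  have t2 : ∀ L : C, hallNumber Z X L * hallNumber L Y M =
      (Nat.card {γ : X ⟶ Z⟦(1 : ℤ)⟧ // FibIs γ L} : ℚ) * G' L := fun L => by
    have hL := aa_ne hB L
    rw [hall_eq hB, hall_eq hB]
    simp only [G', hK]
    field_simp
  simp only [t1, t2]
  rw [sum_lemma G hG F (fun α => ⟨_, _, HF α⟩), sum_lemma G' hG' F' (fun γ => ⟨_, _, HF' γ⟩)]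
  simp only [G, G', ← Finset.mul_sum]
  congr 1
  have s1 : ∀ α, (Nat.card {β : F α ⟶ Z⟦(1 : ℤ)⟧ // FibIs β M} : ℚ) =
      ∑ γ, (Nat.card {β : F α ⟶ Z⟦(1 : ℤ)⟧ // i α ≫ β = γ ∧ FibIs β M} : ℚ) := fun α => by
    rw [card_split _ (fun β => i α ≫ β)]; push_cast; rfl
  have s2 : ∀ γ, (Nat.card {β' : Y ⟶ (F' γ)⟦(1 : ℤ)⟧ // FibIs β' M} : ℚ) =
      ∑ α, (Nat.card {β' : Y ⟶ (F' γ)⟦(1 : ℤ)⟧ // β' ≫ (q γ)⟦(1 : ℤ)⟧' = α ∧ FibIs β' M} : ℚ) :=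
    fun γ => by
      rw [card_split _ (fun β' => β' ≫ (q γ)⟦(1 : ℤ)⟧')]; push_cast; rfl
  simp only [s1, s2, Finset.sum_mul]
  rw [Finset.sum_comm]
  exact Finset.sum_congr rfl fun γ _ => Finset.sum_congr rfl fun α _ =>
    NQ hB (HF α) (HF' γ) M

lemma coneIs_zero_iff {A L : C} (f : A ⟶ L) : ConeIs f (0 : C) ↔ IsIso f := by
  constructor
  · rintro ⟨g, h, H⟩
    exact (Triangle.isZero₃_iff_isIso₁ _ H).1 (isZero_zero C)
  · intro hf
    exact ⟨0, 0, (Triangle.distinguished_iff_of_isZero₃ (Triangle.mk f (0 : L ⟶ (0 : C)) 0)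
      (isZero_zero C)).2 hf⟩

lemma right_unit (hB : ∀ X Y : C, ∃ N : ℕ, Bdd N X Y)
    (A : C) (q : Quotient (isIsomorphicSetoid C)) :
    (q = Quotient.mk (isIsomorphicSetoid C) A → hallNumber A 0 (Quotient.out q) = 1) ∧
    (q ≠ Quotient.mk (isIsomorphicSetoid C) A → hallNumber A 0 (Quotient.out q) = 0) := by
  constructor
  · rintro rfl
    obtain ⟨e⟩ := out_iso A
    rw [← hall_congr hB (Iso.refl A) (Iso.refl 0) e]
    have h : Nat.card {f : A ⟶ A // ConeIs f (0 : C)} = Nat.card (Aut A) := by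
      symm
      refine Nat.card_eq_of_bijective
        (fun e : A ≅ A => (⟨e.hom, (coneIs_zero_iff _).2 (Iso.isIso_hom e)⟩ :
          {f : A ⟶ A // ConeIs f (0 : C)})) ⟨?_, ?_⟩
      · intro e e' he
        exact Iso.ext (congrArg Subtype.val he)
      · rintro ⟨f, hf⟩
        have := (coneIs_zero_iff _).1 hf
        exact ⟨asIso f, rfl⟩
    unfold hallNumber
    rw [h]
    exact div_self (aa_ne hB A)
  · intro hq
    have hq' := ne_class hq
    have : IsEmpty {f : A ⟶ q.out // ConeIs f (0 : C)} :=
      ⟨fun f => by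
        have := (coneIs_zero_iff _).1 f.2
        exact hq'.false (asIso f.1)⟩
    unfold hallNumber
    rw [Nat.card_of_isEmpty]; simp

lemma bdd_zero (W : C) : Bdd 0 (0 : C) W := fun i _ _ =>
  ((shiftFunctor C (i : ℤ)).map_isZero (isZero_zero C)).eq_of_src _ _

lemma left_unit (hB : ∀ X Y : C, ∃ N : ℕ, Bdd N X Y)
    (A : C) (q : Quotient (isIsomorphicSetoid C)) :
    (q = Quotient.mk (isIsomorphicSetoid C) A → hallNumber 0 A (Quotient.out q) = 1) ∧
    (q ≠ Quotient.mk (isIsomorphicSetoid C) A → hallNumber 0 A (Quotient.out q) = 0) := by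
  constructor
  · rintro rfl
    obtain ⟨e⟩ := out_iso A
    rw [← hall_congr hB (Iso.refl 0) (Iso.refl A) e]
    have h : Nat.card {f : (0 : C) ⟶ A // ConeIs f A} = 1 := by
      rw [Nat.card_eq_one_iff_unique]
      refine ⟨⟨fun a b => Subtype.ext ((isZero_zero C).eq_of_src _ _)⟩, ⟨0, 𝟙 A, 0, ?_⟩⟩
      exact (Triangle.distinguished_iff_of_isZero₁ (Triangle.mk (0 : (0 : C) ⟶ A) (𝟙 A) 0)
        (isZero_zero C)).2 (inferInstanceAs (IsIso (𝟙 A)))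
    have h' : Nat.card (Aut (0 : C)) = 1 := by
      rw [Nat.card_eq_one_iff_unique]
      exact ⟨⟨fun a b => Iso.ext ((isZero_zero C).eq_of_src _ _)⟩, ⟨Iso.refl _⟩⟩
    unfold hallNumber
    rw [h, h', hap_zero (bdd_zero A), hap_zero (bdd_zero 0)]
    norm_num
  · intro hq
    have hq' := ne_class hq
    have : IsEmpty {f : (0 : C) ⟶ q.out // ConeIs f A} :=
      ⟨fun f => by
        obtain ⟨f, g, h, H⟩ := f
        have : IsIso g := (Triangle.isZero₁_iff_isIso₂ _ H).1 (isZero_zero C)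
        exact hq'.false (asIso g).symm⟩
    unfold hallNumber
    rw [Nat.card_of_isEmpty]; simp

end

end DHall

/-- associativity and unitality of the derived Hall algebra.  The derived
Hall numbers only depend on isomorphism classes, the Hall products `u_[X] * u_[Y]` have
finitely many nonzero structure constants, the multiplication is associative and `u_[0]`
is a unit; hence the `ℚ`-vector space on the isomorphism classes of objects of `C` is an
associative unital algebra. -/
theorem stmt13 {k : Type*} [Field k] [Finite k]
    {C : Type u} [CategoryTheory.Category.{v} C] [Preadditive C] [CategoryTheory.Linear k C]
    [HasZeroObject C] [HasBinaryBiproducts C] [HasShift C ℤ]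
    [∀ i : ℤ, (CategoryTheory.shiftFunctor C i).Additive] [Pretriangulated C]
    [IsTriangulated C]
    [∀ X Y : C, FiniteDimensional k (X ⟶ Y)]
    (hloc : ∀ X : C, Indecomposable X → IsLocalRing (CategoryTheory.End X))
    (hhfin : ∀ X Y : C, ∃ N : ℕ, ∀ i ≥ N, ∀ f : X⟦(i : ℤ)⟧ ⟶ Y, f = 0)
    (X Y Z M : C) :
    -- the Hall numbers only depend on isomorphism classes
    (∀ (A A' B B' L L' : C), Nonempty (A ≅ A') → Nonempty (B ≅ B') → Nonempty (L ≅ L') →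
        hallNumber A B L = hallNumber A' B' L') ∧
    -- the structure constants of each product have finite support over iso classes
    (∀ (A B : C), (Function.support (fun q : Quotient (isIsomorphicSetoid C) =>
        hallNumber A B (Quotient.out q))).Finite) ∧
    (Function.support (fun q : Quotient (isIsomorphicSetoid C) =>
        hallNumber X Y (Quotient.out q) * hallNumber Z (Quotient.out q) M)).Finite ∧
    (Function.support (fun q : Quotient (isIsomorphicSetoid C) =>
        hallNumber Z X (Quotient.out q) * hallNumber (Quotient.out q) Y M)).Finite ∧
    -- associativity: `∑_[L] F_{XY}^L F_{ZL}^M = ∑_[L'] F_{ZX}^{L'} F_{L'Y}^M`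
    (∑ᶠ q : Quotient (isIsomorphicSetoid C),
        hallNumber X Y (Quotient.out q) * hallNumber Z (Quotient.out q) M) =
      (∑ᶠ q : Quotient (isIsomorphicSetoid C),
        hallNumber Z X (Quotient.out q) * hallNumber (Quotient.out q) Y M) ∧
    -- `u_[0]` is a right unit: `F_{A,0}^L = δ_{[L],[A]}`
    (∀ (A : C) (q : Quotient (isIsomorphicSetoid C)),
        (q = Quotient.mk (isIsomorphicSetoid C) A → hallNumber A 0 (Quotient.out q) = 1) ∧
        (q ≠ Quotient.mk (isIsomorphicSetoid C) A → hallNumber A 0 (Quotient.out q) = 0)) ∧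
    -- `u_[0]` is a left unit: `F_{0,A}^L = δ_{[L],[A]}`
    (∀ (A : C) (q : Quotient (isIsomorphicSetoid C)),
        (q = Quotient.mk (isIsomorphicSetoid C) A → hallNumber 0 A (Quotient.out q) = 1) ∧
        (q ≠ Quotient.mk (isIsomorphicSetoid C) A → hallNumber 0 A (Quotient.out q) = 0)) := by
  have hfin : ∀ X Y : C, Finite (X ⟶ Y) := fun X Y => Module.finite_of_finite k
  have hB : ∀ X Y : C, ∃ N : ℕ, DHall.Bdd N X Y := hhfin
  refine ⟨?_, DHall.hall_finite hB, ?_, ?_, DHall.assoc hB X Y Z M,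
    DHall.right_unit hB, DHall.left_unit hB⟩
  · rintro A A' B B' L L' ⟨a⟩ ⟨b⟩ ⟨e⟩
    exact DHall.hall_congr hB a b e
  · exact (DHall.hall_finite hB X Y).subset fun q hq => left_ne_zero_of_mul hq
  · exact (DHall.hall_finite hB Z X).subset fun q hq => left_ne_zero_of_mul hq
end
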